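/- arXiv:1705.10239 — 8 statements merged into one kernel-verified Lean document; each statement's English description precedes it below -/
import Mathlib

section
/- Let I = (G, N, 𝒰) be an instance of connected fair division in which G = (V, E) is a tree with at least n vertices, and let (q_i)_{i ∈ N} be a family of rational numbers such that mms_i(I) ≥ q_i for every player i ∈ N. Then there exists a valid allocation π such that u_i(π(i)) ≥ q_i for every player i ∈ N. -/
/-!
Each player can be given one of the parts of her own partition. The intersection graph of subtrees
of a forest is chordal (Gavril): root the forest and take, among finitely many subtrees, one whose
vertex `v` closest to the root is as deep as possible. Every other one of the subtrees that meets it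
contains `v`, so its neighbours in the intersection graph form a clique. The proposals of one player
are pairwise disjoint, so a clique contains at most one of them. Giving the chosen part to its owner
therefore costs each remaining player at most one of her `n` parts, and `n - 1` parts suffice for
the remaining `n - 1` players.
-/

/-- The total utility of a set of items under an additive utility function `u`. -/
noncomputable def setVal {V : Type*} (u : V → ℚ) (X : Set V) : ℚ := ∑ᶠ x ∈ X, u x

/-- A set of items induces a connected subgraph of `G`. -/
def ConnOn {V : Type*} (G : SimpleGraph V) (X : Set V) : Prop := (G.induce X).Connected

/-- A (possibly empty) bundle is connected in `G`. -/
def PreconnOn {V : Type*} (G : SimpleGraph V) (X : Set V) : Prop := (G.induce X).Preconnected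

/-- An allocation is valid if every bundle is connected in `G` and bundles are
pairwise disjoint. -/
def ValidAlloc {V N : Type*} (G : SimpleGraph V) (π : N → Set V) : Prop :=
  (∀ i, PreconnOn G (π i)) ∧ ∀ i j, i ≠ j → Disjoint (π i) (π j)

/-- A partition of the whole vertex set into `n` nonempty parts, each inducing a
connected subgraph of `G`. -/
def IsConnPartition {V : Type*} {n : ℕ} (G : SimpleGraph V) (P : Fin n → Set V) : Prop :=
  (∀ j, (P j).Nonempty) ∧ (∀ j, ConnOn G (P j)) ∧
    (∀ j k, j ≠ k → Disjoint (P j) (P k)) ∧ (⋃ j, P j) = Set.univ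

open Finset SimpleGraph

section Subtrees

variable {V : Type*} {G : SimpleGraph V} {P Q : Set V} {r v w x : V}

theorem isPath_append_of_support_inter {p : G.Walk r v} {q : G.Walk v x} (hp : p.IsPath)
    (hq : q.IsPath) (hpq : ∀ y ∈ p.support, y ∈ q.support → y = v) : (p.append q).IsPath := by
  have hq' : v ∉ q.support.tail ∧ q.support.tail.Nodup := by
    rw [← List.nodup_cons, Walk.cons_tail_support]
    exact hq.support_nodup
  rw [Walk.isPath_def, Walk.support_append]
  refine hp.support_nodup.append hq'.2 fun y hyp hyq => hq'.1 ?_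
  exact hpq y hyp (List.mem_of_mem_tail hyq) ▸ hyq

theorem dist_lt_of_mem_support_of_length_eq_dist {p : G.Walk r v} (hp : p.length = G.dist r v)
    (hw : w ∈ p.support) (hwv : w ≠ v) : G.dist r w < G.dist r v := by
  classical
  exact hp ▸ (dist_le (p.takeUntil w hw)).trans_lt (Walk.length_takeUntil_lt_length hw hwv)

theorem PreconnOn.exists_isPath (hP : PreconnOn G P) (hv : v ∈ P) (hx : x ∈ P) :
    ∃ p : G.Walk v x, p.IsPath ∧ ∀ y ∈ p.support, y ∈ P := by
  obtain ⟨p, hp⟩ := (hP ⟨v, hv⟩ ⟨x, hx⟩).exists_isPath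
  refine ⟨p.map (Embedding.induce P).toHom, hp.map (Embedding.induce (G := G) P).injective, ?_⟩
  intro y hy
  obtain ⟨z, -, rfl⟩ := List.mem_map.1 (Walk.support_map (Embedding.induce P).toHom p ▸ hy)
  exact z.2

theorem PreconnOn.reachable (hP : PreconnOn G P) (hv : v ∈ P) (hx : x ∈ P) : G.Reachable v x :=
  let ⟨p, _⟩ := hP.exists_isPath hv hx
  p.reachable

theorem PreconnOn.mem_support_of_isMinOn_dist (hG : G.IsAcyclic) (hP : PreconnOn G P)
    (hv : v ∈ P) (hmin : IsMinOn (G.dist r) P v) (hx : x ∈ P) (p : G.Walk r x) :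
    v ∈ p.support := by
  classical
  obtain ⟨a, ha, halen⟩ := (p.reachable.trans (hP.reachable hx hv)).exists_path_of_dist
  obtain ⟨b, hb, hbP⟩ := hP.exists_isPath hv hx
  -- The geodesic `a` meets `P` only at its end `v`, by minimality of `v`.
  have hab : (a.append b).IsPath := isPath_append_of_support_inter ha hb fun y hya hyb =>
    by_contra fun hyv => (isMinOn_iff.1 hmin y (hbP y hyb)).not_gt
      (dist_lt_of_mem_support_of_length_eq_dist halen hya hyv)
  have hpath : p.bypass = a.append b :=
    congrArg Subtype.val ((hG.subsingleton_path r x).elim ⟨_, p.bypass_isPath⟩ ⟨_, hab⟩)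
  apply p.support_bypass_subset_support
  rw [hpath, Walk.mem_support_append_iff]
  exact Or.inl a.end_mem_support

theorem PreconnOn.mem_of_isMinOn_dist (hG : G.IsAcyclic) (hP : PreconnOn G P)
    (hQ : PreconnOn G Q) (hPQ : ¬Disjoint P Q) (hr : G.Reachable r v) (hv : v ∈ P)
    (hmin : IsMinOn (G.dist r) P v) (hw : w ∈ Q) (hwv : G.dist r w ≤ G.dist r v) : v ∈ Q := by
  obtain ⟨x, hxP, hxQ⟩ := Set.not_disjoint_iff.1 hPQ
  have hrw : G.Reachable r w := (hr.trans (hP.reachable hv hxP)).trans (hQ.reachable hxQ hw)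
  obtain ⟨a, -, halen⟩ := hrw.exists_path_of_dist
  obtain ⟨b, -, hbQ⟩ := hQ.exists_isPath hw hxQ
  have hvab := hP.mem_support_of_isMinOn_dist hG hv hmin hxP (a.append b)
  rcases (Walk.mem_support_append_iff a b).1 hvab with hva | hvb
  · have hvw : v = w := by_contra fun hne =>
      hwv.not_gt (dist_lt_of_mem_support_of_length_eq_dist halen hva hne)
    rwa [hvw]
  · exact hbQ v hvb

theorem exists_depth_mem_of_isMinOn_of_isAcyclic (hG : G.IsAcyclic) :
    ∃ depth : V → ℕ, ∀ {P Q : Set V} {v w : V}, PreconnOn G P → PreconnOn G Q → ¬Disjoint P Q →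
      v ∈ P → IsMinOn depth P v → w ∈ Q → depth w ≤ depth v → v ∈ Q := by
  refine ⟨fun v => G.dist (G.connectedComponentMk v).out v, ?_⟩
  intro P Q v w hP hQ hPQ hv hmin hw hwv
  have hdepth : ∀ y, G.Reachable v y →
      G.dist (G.connectedComponentMk y).out y = G.dist (G.connectedComponentMk v).out y :=
    fun y hvy => by rw [ConnectedComponent.sound hvy]
  have hroot : G.Reachable (G.connectedComponentMk v).out v :=
    ConnectedComponent.exact (Quot.out_eq (G.connectedComponentMk v))
  obtain ⟨x, hxP, hxQ⟩ := Set.not_disjoint_iff.1 hPQ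
  have hvw : G.Reachable v w := (hP.reachable hv hxP).trans (hQ.reachable hxQ hw)
  exact hP.mem_of_isMinOn_dist hG hQ hPQ hroot hv
    (isMinOn_iff.2 fun y hy => (isMinOn_iff.1 hmin y hy).trans_eq (hdepth y (hP.reachable hv hy)))
    hw ((hdepth w hvw).symm.trans_le hwv)

end Subtrees

section Chordal

variable {ι V N : Type*}

/-- A graph is chordal if it has no induced cycle of length at least four. This is encoded by
Dirac's criterion, the form in which chordality is used here: every nonempty finite set of vertices
contains a simplicial one, whose neighbours in the set form a clique. -/
def IsChordal (H : SimpleGraph ι) : Prop :=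
  ∀ s : Finset ι, s.Nonempty → ∃ a ∈ s, H.IsClique (s ∩ H.neighborSet a)

/-- The intersection graph of a family of sets. Its vertices are the indices, so equal nonempty
sets with different indices are adjacent. -/
def intersectionGraph (A : ι → Set V) : SimpleGraph ι where
  Adj i j := i ≠ j ∧ ¬Disjoint (A i) (A j)
  symm := ⟨fun _ _ h => ⟨h.1.symm, fun hd => h.2 hd.symm⟩⟩
  loopless := ⟨fun _ h => h.1 rfl⟩

theorem intersectionGraph_adj {A : ι → Set V} {i j : ι} :
    (intersectionGraph A).Adj i j ↔ i ≠ j ∧ ¬Disjoint (A i) (A j) :=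
  Iff.rfl

theorem isChordal_intersectionGraph_of_isAcyclic {G : SimpleGraph V} (hG : G.IsAcyclic)
    {A : ι → Set V} (hA : ∀ i, PreconnOn G (A i)) : IsChordal (intersectionGraph A) := by
  intro s hs
  by_cases hne : ∀ i ∈ s, (A i).Nonempty
  · obtain ⟨depth, hdepth⟩ := exists_depth_mem_of_isMinOn_of_isAcyclic hG
    have : Nonempty V := let ⟨i, hi⟩ := hs; ⟨(hne i hi).some⟩
    have hmin : ∀ i ∈ s, ∃ v ∈ A i, IsMinOn depth (A i) v := fun i hi =>
      ⟨_, Function.argminOn_mem depth (A i) (hne i hi),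
        fun _ hy => Function.argminOn_le depth (A i) hy⟩
    choose! top htop htop_min using hmin
    obtain ⟨a, ha, hmax⟩ := s.exists_max_image (fun i => depth (top i)) hs
    have htop_mem : ∀ b ∈ s, (intersectionGraph A).Adj a b → top a ∈ A b := fun b hb hab =>
      hdepth (hA a) (hA b) hab.2 (htop a ha) (htop_min a ha) (htop b hb) (hmax b hb)
    exact ⟨a, ha, fun b hb c hc hbc => intersectionGraph_adj.2
      ⟨hbc, Set.not_disjoint_iff.2 ⟨top a, htop_mem b hb.1 hb.2, htop_mem c hc.1 hc.2⟩⟩⟩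
  · push Not at hne
    obtain ⟨a, ha, hempty⟩ := hne
    refine ⟨a, ha, fun b hb => ((intersectionGraph_adj.1 hb.2).2 ?_).elim⟩
    rw [hempty]
    exact Set.empty_disjoint _

theorem card_le_card_filter_not_adj_add_one [DecidableEq ι] {H : SimpleGraph ι}
    [DecidableRel H.Adj] {T : Finset ι} {a : ι} (hT : H.IsIndepSet T)
    (ha : H.IsClique (↑T ∩ H.neighborSet a)) : #T ≤ #{b ∈ T | a ≠ b ∧ ¬H.Adj a b} + 1 := by
  have hclosed : H.IsClique (insert a (↑T ∩ H.neighborSet a)) := ha.insert fun b hb _ => hb.2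
  have hlost : #{b ∈ T | ¬(a ≠ b ∧ ¬H.Adj a b)} ≤ 1 := by
    refine card_le_one.2 fun b hb c hc => by_contra fun hbc => ?_
    rw [mem_filter] at hb hc
    have hmem : ∀ d ∈ T, ¬(a ≠ d ∧ ¬H.Adj a d) → d ∈ insert a (↑T ∩ H.neighborSet a) := by
      grind [mem_neighborSet]
    exact hT hb.1 hc.1 hbc (hclosed (hmem b hb.1 hb.2) (hmem c hc.1 hc.2) hbc)
  have := card_filter_add_card_filter_not (s := T) (fun b => a ≠ b ∧ ¬H.Adj a b)
  lia

theorem IsChordal.exists_independent_transversal [Nonempty ι] {H : SimpleGraph ι}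
    (hH : IsChordal H) {S : Finset N} {T : N → Finset ι} (hT : ∀ i ∈ S, H.IsIndepSet (T i))
    (hcard : ∀ i ∈ S, #S ≤ #(T i)) : ∃ f : N → ι, (∀ i ∈ S, f i ∈ T i) ∧
      (S : Set N).Pairwise fun i k => f i ≠ f k ∧ ¬H.Adj (f i) (f k) := by
  classical
  induction hn : #S generalizing S T with
  | zero =>
    obtain rfl := card_eq_zero.1 hn
    exact ⟨fun _ => Classical.arbitrary ι, by simp⟩
  | succ n ih =>
    have hne : (S.biUnion T).Nonempty := by
      obtain ⟨i, hi⟩ : S.Nonempty := card_pos.1 (by lia)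
      obtain ⟨b, hb⟩ : (T i).Nonempty := card_pos.1 (by have := hcard i hi; lia)
      exact ⟨b, mem_biUnion.2 ⟨i, hi, hb⟩⟩
    obtain ⟨a, haT, ha⟩ := hH _ hne
    obtain ⟨k, hk, hak⟩ := mem_biUnion.1 haT
    have hloss : ∀ i ∈ S, #(T i) ≤ #{b ∈ T i | a ≠ b ∧ ¬H.Adj a b} + 1 := fun i hi =>
      card_le_card_filter_not_adj_add_one (hT i hi)
        (ha.subset (Set.inter_subset_inter_left _ (subset_biUnion_of_mem T hi)))
    obtain ⟨f, hfT, hf⟩ := ih (S := S.erase k) (T := fun i => {b ∈ T i | a ≠ b ∧ ¬H.Adj a b})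
      (fun i hi => (hT i (mem_of_mem_erase hi)).mono (filter_subset _ _))
      (fun i hi => by
        have := hcard i (mem_of_mem_erase hi)
        have := hloss i (mem_of_mem_erase hi)
        have := card_erase_of_mem hk
        lia)
      (by rw [card_erase_of_mem hk, hn, Nat.add_sub_cancel])
    have hfS : ∀ i ∈ S, i ≠ k → f i ∈ T i ∧ a ≠ f i ∧ ¬H.Adj a (f i) := fun i hi hik =>
      mem_filter.1 (hfT i (mem_erase.2 ⟨hik, hi⟩))
    refine ⟨Function.update f k a, fun i hi => ?_, fun i hi j hj hij => ?_⟩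
    · grind
    · have hfi := @hf i
      grind [H.adj_comm]

end Chordal

theorem prop_thm_mms_tree_general {V N J : Type*} [Fintype N] [Fintype J] {G : SimpleGraph V}
    (hG : G.IsAcyclic) (hcard : Fintype.card N ≤ Fintype.card J) {P : N → J → Set V}
    (hP : ∀ i, ValidAlloc G (P i)) : ∃ f : N → J, ValidAlloc G fun i => P i (f i) := by
  classical
  cases isEmpty_or_nonempty N with
  | inl _ => exact ⟨isEmptyElim, isEmptyElim, isEmptyElim⟩
  | inr _ =>
    have : Nonempty J := Fintype.card_pos_iff.1 (Fintype.card_pos.trans_le hcard)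
    let A : N × J → Set V := fun p => P p.1 p.2
    have hA : IsChordal (intersectionGraph A) :=
      isChordal_intersectionGraph_of_isAcyclic hG fun p => (hP p.1).1 p.2
    have hindep : ∀ i, (intersectionGraph A).IsIndepSet ↑({i} ×ˢ univ : Finset (N × J)) := by
      rintro i ⟨i₁, j⟩ hj ⟨i₂, k⟩ hk hjk hadj
      obtain rfl : i = i₁ := by simpa using hj
      obtain rfl : i = i₂ := by simpa using hk
      exact (intersectionGraph_adj.1 hadj).2 ((hP i).2 j k (by simpa using hjk))
    obtain ⟨f, hf, hfindep⟩ := hA.exists_independent_transversal (S := univ)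
      (fun i _ => hindep i) (by simpa using hcard)
    have hfst : ∀ i, (f i).1 = i := fun i => mem_singleton.1 (mem_product.1 (hf i (mem_univ i))).1
    have hfdisj : ∀ i k, i ≠ k → Disjoint (A (f i)) (A (f k)) := fun i k hik =>
      have h := hfindep (mem_univ i) (mem_univ k) hik
      by_contra fun hmeet => h.2 (intersectionGraph_adj.2 ⟨h.1, hmeet⟩)
    simp only [A, hfst] at hfdisj
    exact ⟨fun i => (f i).2, fun i => (hP i).1 _, hfdisj⟩

/-- If `G` is a tree with at least `n` vertices and `mms_i(I) ≥ q_i` for each player `i`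
(equivalently, each player `i` has a connected partition all of whose parts she values at
least `q_i`), then there is a valid allocation giving each player `i` value at least `q_i`. -/
theorem prop_thm_mms_tree {V N : Type*} [Fintype V] [Fintype N] [Nonempty N]
    (G : SimpleGraph V) (hG : G.IsTree)
    (hcard : Fintype.card N ≤ Fintype.card V)
    (u : N → V → ℚ) (hnn : ∀ i v, 0 ≤ u i v) (hsum : ∀ i, ∑ v, u i v = 1)
    (q : N → ℚ)
    (hmms : ∀ i : N, ∃ P : Fin (Fintype.card N) → Set V,
      IsConnPartition G P ∧ ∀ j, q i ≤ setVal (u i) (P j)) :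
    ∃ π : N → Set V, ValidAlloc G π ∧ ∀ i, q i ≤ setVal (u i) (π i) := by
  choose P hP hq using hmms
  obtain ⟨f, hf⟩ := prop_thm_mms_tree_general hG.isAcyclic (Fintype.card_fin _).ge
    fun i => ⟨fun j => ((hP i).2.1 j).preconnected, (hP i).2.2.1⟩
  exact ⟨fun i => P i (f i), hf, fun i => hq i (f i)⟩
end

section
/- Let G = (V, E) be a tree rooted at a vertex r, and for v ∈ V let D(v) denote the set of descendants of v in the rooted tree (including v itself). Let u : V → ℚ≥0 be an additive set function (u(X) = Σ_{v∈X} u(v)), let q ∈ ℚ, and let v ∈ V be a vertex such that u(D(w)) < q for every child w of v. If 𝒫 is a partition of V into nonempty parts, each inducing a connected subgraph of G and each satisfying u(P) ≥ q for all P ∈ 𝒫, then D(v) is entirely contained in the part of 𝒫 that contains v. -/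
/-- In a tree rooted at `r`, the descendants of `v` (including `v` itself):
those vertices `x` such that `v` lies on the unique path from `r` to `x`. -/
def descendants {V : Type*} (G : SimpleGraph V) (r v : V) : Set V :=
  {x | G.dist r x = G.dist r v + G.dist v x}

/-- In a tree rooted at `r`, `w` is a child of `v` if it is a neighbor of `v`
that is farther from the root. -/
def IsChild {V : Type*} (G : SimpleGraph V) (r v w : V) : Prop :=
  G.Adj v w ∧ G.dist r w = G.dist r v + 1

section RootedGraph

variable {V : Type*} {G : SimpleGraph V} {r v w x y : V} {Q S : Set V}

theorem exists_adj_dist_eq_add_one (h : G.Reachable x y) (hne : x ≠ y) :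
    ∃ z, G.Adj x z ∧ G.dist x y = G.dist z y + 1 := by
  obtain ⟨p, hp⟩ := h.exists_walk_length_eq_dist
  cases p with
  | nil => exact absurd rfl hne
  | cons hadj p =>
    have hp' := SimpleGraph.length_eq_dist_of_subwalk hp (p.isSubwalk_cons hadj)
    exact ⟨_, hadj, by rw [← hp, ← hp', SimpleGraph.Walk.length_cons]⟩

theorem IsChild.parent_unique (hG : G.IsAcyclic) (hv : IsChild G r v x)
    (hw : IsChild G r w x) : v = w := by
  have hr : G.Reachable r x := .of_dist_ne_zero (by rw [hv.2]; exact Nat.succ_ne_zero _)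
  obtain ⟨p, hp⟩ := (hr.trans hv.1.symm.reachable).exists_walk_length_eq_dist
  obtain ⟨q, hq⟩ := (hr.trans hw.1.symm.reachable).exists_walk_length_eq_dist
  have hpx : (p.concat hv.1).IsPath :=
    SimpleGraph.Walk.isPath_of_length_eq_dist _ (by rw [p.length_concat, hp, hv.2])
  have hqx : (q.concat hw.1).IsPath :=
    SimpleGraph.Walk.isPath_of_length_eq_dist _ (by rw [q.length_concat, hq, hw.2])
  have hpq : p.concat hv.1 = q.concat hw.1 :=
    congrArg Subtype.val ((hG.subsingleton_path r x).elim ⟨_, hpx⟩ ⟨_, hqx⟩)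
  simpa only [SimpleGraph.Walk.penultimate_concat] using
    congrArg SimpleGraph.Walk.penultimate hpq

theorem mem_descendants_iff : x ∈ descendants G r v ↔ G.dist r x = G.dist r v + G.dist v x :=
  Iff.rfl

theorem IsChild.mem_descendants (h : IsChild G r v w) : w ∈ descendants G r v := by
  rw [mem_descendants_iff, h.2, SimpleGraph.dist_eq_one_iff_adj.2 h.1]

theorem mem_descendants_trans (hG : G.Connected) (hx : x ∈ descendants G r w)
    (hw : w ∈ descendants G r v) : x ∈ descendants G r v := by
  rw [mem_descendants_iff] at *
  have hrx : G.dist r x ≤ G.dist r v + G.dist v x := hG.dist_triangle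
  have hvx : G.dist v x ≤ G.dist v w + G.dist w x := hG.dist_triangle
  omega

theorem exists_isChild_mem_descendants (hG : G.Connected) (hx : x ∈ descendants G r v)
    (hne : x ≠ v) : ∃ w, IsChild G r v w ∧ x ∈ descendants G r w := by
  obtain ⟨w, hvw, hdist⟩ := exists_adj_dist_eq_add_one (hG v x) hne.symm
  rw [mem_descendants_iff] at hx
  have hrx : G.dist r x ≤ G.dist r w + G.dist w x := hG.dist_triangle
  have hrw : G.dist r w ≤ G.dist r v + G.dist v w := hG.dist_triangle
  rw [SimpleGraph.dist_eq_one_iff_adj.2 hvw] at hrw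
  exact ⟨w, ⟨hvw, by omega⟩, mem_descendants_iff.2 (by omega)⟩

theorem exists_mem_descendants_isChild (hG : G.Connected) (hx : x ∈ descendants G r v)
    (hne : x ≠ v) : ∃ y ∈ descendants G r v, IsChild G r y x := by
  obtain ⟨y, hxy, hdist⟩ := exists_adj_dist_eq_add_one (hG x v) hne
  rw [mem_descendants_iff] at hx
  have hry : G.dist r y ≤ G.dist r v + G.dist v y := hG.dist_triangle
  have hrx : G.dist r x ≤ G.dist r y + G.dist y x := hG.dist_triangle
  rw [SimpleGraph.dist_eq_one_iff_adj.2 hxy.symm] at hrx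
  rw [G.dist_comm (u := x), G.dist_comm (u := y)] at hdist
  exact ⟨y, mem_descendants_iff.2 (by omega), hxy.symm, by omega⟩

theorem IsChild.mem_descendants_of_adj (hG : G.IsTree) (hw : IsChild G r v w)
    (hx : x ∈ descendants G r w) (hxy : G.Adj x y) (hyv : y ≠ v) : y ∈ descendants G r w := by
  rcases hG.dist_eq_dist_add_one_of_adj r hxy with hdist | hdist
  · have hyx : IsChild G r y x := ⟨hxy.symm, hdist⟩
    have hxw : x ≠ w := by
      rintro rfl
      exact hyv (hyx.parent_unique hG.isAcyclic hw)
    obtain ⟨z, hz, hzx⟩ := exists_mem_descendants_isChild hG.connected hx hxw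
    rwa [hyx.parent_unique hG.isAcyclic hzx]
  · have hyx : IsChild G r x y := ⟨hxy, hdist⟩
    exact mem_descendants_trans hG.connected hyx.mem_descendants hx

theorem PreconnOn.subset_of_adj_closed (hQ : PreconnOn G Q) (hQS : (Q ∩ S).Nonempty)
    (hS : ∀ x ∈ Q ∩ S, ∀ y ∈ Q, G.Adj x y → y ∈ S) : Q ⊆ S := by
  obtain ⟨x, hxQ, hxS⟩ := hQS
  intro y hyQ
  by_contra hyS
  obtain ⟨p⟩ := hQ ⟨x, hxQ⟩ ⟨y, hyQ⟩
  obtain ⟨d, -, hfst, hsnd⟩ := p.exists_boundary_dart (Subtype.val ⁻¹' S) hxS hyS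
  exact hsnd (hS d.fst ⟨d.fst.2, hfst⟩ d.snd d.snd.2 d.adj)

theorem IsChild.subset_descendants (hG : G.IsTree) (hw : IsChild G r v w)
    (hQ : PreconnOn G Q) (hvQ : v ∉ Q) (hQw : (Q ∩ descendants G r w).Nonempty) :
    Q ⊆ descendants G r w :=
  hQ.subset_of_adj_closed hQw fun _ hx _ hy hxy =>
    hw.mem_descendants_of_adj hG hx.2 hxy (ne_of_mem_of_not_mem hy hvQ)

end RootedGraph

theorem setVal_mono {V : Type*} {u : V → ℚ} (hfin : u.HasFiniteSupport) (hnn : ∀ x, 0 ≤ u x) :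
    Monotone (setVal u) := by
  intro X Y hXY
  simp only [setVal, finsum_mem_def]
  have hind : ∀ Z : Set V, (Z.indicator u).HasFiniteSupport := fun Z =>
    hfin.subset (Set.support_indicator.trans_subset Set.inter_subset_right)
  exact finsum_le_finsum' (hind X) (hind Y) (Set.indicator_le_indicator_of_subset hXY hnn)

theorem descendants_subset_part_general {V α : Type*} [Preorder α] {G : SimpleGraph V}
    (hG : G.IsTree) {r v : V} {f : Set V → α} (hf : Monotone f) {q : α}
    (hv : ∀ w, IsChild G r v w → f (descendants G r w) < q) {Ps : Set (Set V)}
    (hconn : ∀ P ∈ Ps, PreconnOn G P) (hdisj : Ps.PairwiseDisjoint id)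
    (hcover : ⋃₀ Ps = Set.univ) (hval : ∀ P ∈ Ps, q ≤ f P) :
    ∀ P ∈ Ps, v ∈ P → descendants G r v ⊆ P := by
  intro P hP hvP x hx
  obtain ⟨Q, hQ, hxQ⟩ : x ∈ ⋃₀ Ps := hcover ▸ Set.mem_univ x
  by_contra hxP
  have hvQ : v ∉ Q := fun hvQ => hxP (hdisj.elim_set hP hQ v hvP hvQ ▸ hxQ)
  obtain ⟨w, hw, hxw⟩ :=
    exists_isChild_mem_descendants hG.connected hx (ne_of_mem_of_not_mem hxQ hvQ)
  have hQw : Q ⊆ descendants G r w := hw.subset_descendants hG (hconn Q hQ) hvQ ⟨x, hxQ, hxw⟩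
  exact ((hval Q hQ).trans (hf hQw)).not_gt (hv w hw)

/-- If every child subtree of `v` has `u`-value less than `q`, and `Ps` is a partition
of the vertex set of the tree into nonempty connected parts each of `u`-value at least `q`,
then `D(v)` is entirely contained in the part of `Ps` containing `v`. -/
theorem descendants_subset_part {V : Type*} [Fintype V]
    (G : SimpleGraph V) (hG : G.IsTree) (r : V)
    (u : V → ℚ) (hnn : ∀ x, 0 ≤ u x) (q : ℚ) (v : V)
    (hv : ∀ w, IsChild G r v w → setVal u (descendants G r w) < q)
    (Ps : Set (Set V))
    (hne : ∀ P ∈ Ps, P.Nonempty)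
    (hconn : ∀ P ∈ Ps, ConnOn G P)
    (hdisj : Ps.PairwiseDisjoint id)
    (hcover : ⋃₀ Ps = Set.univ)
    (hval : ∀ P ∈ Ps, q ≤ setVal u P) :
    ∀ P ∈ Ps, v ∈ P → descendants G r v ⊆ P :=
  descendants_subset_part_general hG (setVal_mono (Set.toFinite _) hnn) hv
    (fun P hP => (hconn P hP).preconnected) hdisj hcover hval
end

section
/- Let G = (V, E) be a tree rooted at a vertex r, with D(v) the set of descendants of v (including v). Let N be a nonempty finite set of players, for each j ∈ N let u_j : V → ℚ≥0 be an additive set function, and let (q_j)_{j ∈ N} be rationals such that u_j(V) ≥ q_j for every j ∈ N. Then there exist a player i ∈ N and a vertex v ∈ V such that u_i(D(v)) ≥ q_i and, for every child w of v and every player j ∈ N, u_j(D(w)) < q_j. -/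
lemma IsChild.dist_lt {V : Type*} {G : SimpleGraph V} {r v w : V} (h : IsChild G r v w) :
    G.dist r v < G.dist r w :=
  h.2 ▸ Nat.lt_succ_self _

@[simp]
lemma descendants_root {V : Type*} (G : SimpleGraph V) (r : V) :
    descendants G r r = Set.univ := by
  simp [descendants]

lemma exists_mem_forall_isChild_notMem {V : Type*} (G : SimpleGraph V) (r : V) {s : Set V}
    (hfin : s.Finite) (hne : s.Nonempty) : ∃ v ∈ s, ∀ w, IsChild G r v w → w ∉ s := by
  obtain ⟨v, hv⟩ := hfin.exists_maximalFor (G.dist r) s hne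
  exact ⟨v, hv.prop, fun w hw ↦ hv.not_prop_of_gt hw.dist_lt⟩

theorem last_diminisher_vertex_exists_general {V N : Type*} [Finite V] (G : SimpleGraph V) (r : V)
    (u : N → V → ℚ) (q : N → ℚ) {i₀ : N} {v₀ : V}
    (h₀ : q i₀ ≤ setVal (u i₀) (descendants G r v₀)) :
    ∃ (i : N) (v : V), q i ≤ setVal (u i) (descendants G r v) ∧
      ∀ w, IsChild G r v w → ∀ j, setVal (u j) (descendants G r w) < q j := by
  let acceptable : Set V := {v | ∃ i, q i ≤ setVal (u i) (descendants G r v)}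
  obtain ⟨v, ⟨i, hi⟩, hv⟩ :=
    exists_mem_forall_isChild_notMem G r acceptable.toFinite ⟨v₀, i₀, h₀⟩
  exact ⟨i, v, hi, fun w hw j ↦ lt_of_not_ge fun hj ↦ hv w hw ⟨j, hj⟩⟩

/-- In a tree rooted at `r`, if each player `j` values the whole vertex set at least `q_j`,
then there are a player `i` and a vertex `v` with `u_i(D(v)) ≥ q_i` such that
`u_j(D(w)) < q_j` for every child `w` of `v` and every player `j`. -/
theorem last_diminisher_vertex_exists {V N : Type*} [Fintype V] [Fintype N] [Nonempty N]
    (G : SimpleGraph V) (hG : G.IsTree) (r : V)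
    (u : N → V → ℚ) (hnn : ∀ j x, 0 ≤ u j x)
    (q : N → ℚ) (hq : ∀ j, q j ≤ setVal (u j) Set.univ) :
    ∃ (i : N) (v : V), q i ≤ setVal (u i) (descendants G r v) ∧
      ∀ w, IsChild G r v w → ∀ j, setVal (u j) (descendants G r w) < q j := by
  obtain ⟨i⟩ := ‹Nonempty N›
  exact last_diminisher_vertex_exists_general G r u q (v₀ := r) (by simpa using hq i)
end

section
/- Let X = {x_1, …, x_{3s}} be a set of 3s elements and 𝒯 = {T_1, …, T_r} a family of 3-element subsets of X with r ≥ s; for x ∈ X let p_x = |{T ∈ 𝒯 : x ∈ T}| and assume 3·p_x ≤ n for every x, where n = 3s + r + 1. Construct the CFD instance I = (G, N, 𝒰) as follows. G is a path whose vertices, in order, are v_{T_1}^1, v_{T_1}^2, v_{T_1}^3, v_{T_2}^1, …, v_{T_r}^3, then b_1, …, b_s, then w. N consists of one player i_T for each T ∈ 𝒯, one player i_x for each x ∈ X, and a dummy player d. Utilities: u_{i_T}(v_T^k) = 1/(3n) for k ∈ {1,2,3}, u_{i_T}(b_j) = 1/n for each j ∈ [s], u_{i_T}(w) = (n − s − 1)/n,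 and u_{i_T} is 0 elsewhere; u_{i_x}(v_T^k) = 1/n for every T with x ∈ T and every k ∈ {1,2,3}, u_{i_x}(w) = (n − 3p_x)/n, and u_{i_x} is 0 elsewhere; u_d(w) = 1 and u_d is 0 elsewhere. Then X can be covered by s pairwise disjoint sets from 𝒯 (an exact cover) if and only if I admits a proportional valid allocation. -/
/-- Items of the X3C reduction: the path has `3r` small vertices (three per set `T_i`,
in order), then `s` big vertices, then the vertex `w`; we identify the `j`-th vertex of
the path with `j : Fin (3r + s + 1)`. -/
abbrev X3CItem (s r : ℕ) := Fin (3 * r + s + 1)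

/-- Players of the X3C reduction: a player `i_T` for each set `T` (left), a player `i_x`
for each element `x` (middle), and the dummy player `d` (right). -/
abbrev X3CPlayer (s r : ℕ) := Fin r ⊕ Fin (3 * s) ⊕ Unit

/-- Utility functions of the X3C reduction (here `n = 3s + r + 1` is the number of
players, vertex `v_{T_i}^k` is the item `3i + (k-1)`, big vertex `b_j` is the item
`3r + (j-1)`, and `w` is the item `3r + s`). -/
noncomputable def x3cUtil (s r : ℕ) (T : Fin r → Finset (Fin (3 * s))) :
    X3CPlayer s r → X3CItem s r → ℚ
  | Sum.inl i, v =>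
      if (v : ℕ) < 3 * r ∧ (v : ℕ) / 3 = (i : ℕ) then 1 / (3 * ((3 * s + r + 1 : ℕ) : ℚ))
      else if 3 * r ≤ (v : ℕ) ∧ (v : ℕ) < 3 * r + s then 1 / ((3 * s + r + 1 : ℕ) : ℚ)
      else if (v : ℕ) = 3 * r + s then
        (((3 * s + r + 1 : ℕ) : ℚ) - (s : ℚ) - 1) / ((3 * s + r + 1 : ℕ) : ℚ)
      else 0
  | Sum.inr (Sum.inl x), v =>
      if (v : ℕ) < 3 * r ∧ ∃ i : Fin r, (i : ℕ) = (v : ℕ) / 3 ∧ x ∈ T i then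
        1 / ((3 * s + r + 1 : ℕ) : ℚ)
      else if (v : ℕ) = 3 * r + s then
        (((3 * s + r + 1 : ℕ) : ℚ)
            - 3 * ((Finset.univ.filter (fun i => x ∈ T i)).card : ℚ))
          / ((3 * s + r + 1 : ℕ) : ℚ)
      else 0
  | Sum.inr (Sum.inr _), v => if (v : ℕ) = 3 * r + s then 1 else 0

open Finset

section General

variable {V W ι α : Type*}

lemma setVal_singleton (u : V → ℚ) (v : V) : setVal u {v} = u v :=
  finsum_mem_singleton

lemma exists_mem_ne_zero_of_setVal_pos {u : V → ℚ} {X : Set V} (h : 0 < setVal u X) :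
    ∃ v ∈ X, u v ≠ 0 :=
  exists_ne_zero_of_finsum_mem_ne_zero h.ne'

lemma setVal_le_sum {u : V → ℚ} {X : Set V} {A : Finset V}
    (hXA : ∀ v ∈ X, u v ≠ 0 → v ∈ A) (hA : ∀ v ∈ A, 0 ≤ u v) :
    setVal u X ≤ ∑ v ∈ A, u v := by
  classical
  have hval : setVal u X = ∑ v ∈ A with v ∈ X, u v := by
    refine finsum_mem_eq_sum_of_inter_support_eq u (Set.ext fun v => ?_)
    simp only [Set.mem_inter_iff, Function.mem_support, coe_filter, Set.mem_ofPred_eq]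
    exact ⟨fun h => ⟨⟨hXA v h.1 h.2, h.1⟩, h.2⟩, fun h => ⟨h.1.2, h.2⟩⟩
  rw [hval]
  exact sum_le_sum_of_subset_of_nonneg (filter_subset _ _) fun v hv _ => hA v hv

lemma preconnOn_singleton (G : SimpleGraph V) (v : V) : PreconnOn G {v} :=
  SimpleGraph.Preconnected.of_subsingleton

lemma preconnOn_range {H : SimpleGraph W} {G : SimpleGraph V} (f : H →g G)
    (hH : H.Preconnected) : PreconnOn G (Set.range f) :=
  hH.map (H := G.induce (Set.range f)) ⟨Set.rangeFactorization f, f.map_adj⟩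
    Set.rangeFactorization_surjective

variable {T : ι → Finset α} {S : Finset ι} {k : ℕ}

lemma exists_injective_slot_of_cover (hT : ∀ i, #(T i) ≤ k) (hcov : ∀ x, ∃ i ∈ S, x ∈ T i) :
    ∃ c : α → ι × Fin k, Function.Injective c ∧ ∀ x, (c x).1 ∈ S ∧ x ∈ T (c x).1 := by
  choose i hiS hiT using hcov
  let slot (z : Σ i, T i) : ι × Fin k := (z.1, ((T z.1).equivFin z.2).castLE (hT z.1))
  have hslot : Function.Injective slot := by
    rintro ⟨i, x⟩ ⟨j, y⟩ hxy
    obtain ⟨rfl, hk⟩ := Prod.mk.inj hxy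
    simpa using hk
  exact ⟨fun x => slot ⟨i x, x, hiT x⟩, fun x y hxy => congrArg (fun z => (z.2 : α)) (hslot hxy),
    fun x => ⟨hiS x, hiT x⟩⟩

variable [DecidableEq α]

lemma pairwiseDisjoint_of_sum_card_le_card_biUnion (h : ∑ i ∈ S, #(T i) ≤ #(S.biUnion T)) :
    (S : Set ι).PairwiseDisjoint T := by
  have hinj : Set.InjOn Sigma.snd (S.sigma T : Set (Σ _ : ι, α)) := by
    refine injOn_of_surjOn_of_card_le (t := S.biUnion T) _ ?_ ?_ (by rwa [card_sigma])
    · rintro ⟨i, x⟩ hix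
      simp only [coe_sigma, Set.mem_sigma_iff, mem_coe] at hix
      exact mem_biUnion.2 ⟨i, hix⟩
    · intro x hx
      obtain ⟨i, hi⟩ := mem_biUnion.1 hx
      exact ⟨⟨i, x⟩, mem_sigma.2 hi, rfl⟩
  intro i hi j hj hij
  refine disjoint_left.2 fun x hxi hxj => hij ?_
  have hxij : (⟨i, x⟩ : Σ _ : ι, α) = ⟨j, x⟩ :=
    hinj (mem_sigma.2 ⟨hi, hxi⟩) (mem_sigma.2 ⟨hj, hxj⟩) rfl
  exact congrArg Sigma.fst hxij

lemma card_eq_and_pairwiseDisjoint_of_cover [Fintype α] {s : ℕ} (hk : 0 < k)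
    (hα : Fintype.card α = k * s) (hT : ∀ i, #(T i) ≤ k) (hS : #S ≤ s)
    (hcov : S.biUnion T = univ) : #S = s ∧ (S : Set ι).PairwiseDisjoint T := by
  have hsum : ∑ i ∈ S, #(T i) ≤ #S * k := sum_le_card_nsmul _ _ _ fun i _ => hT i
  have hunion : #(S.biUnion T) = k * s := by rw [hcov, card_univ, hα]
  constructor
  · refine hS.antisymm (Nat.le_of_mul_le_mul_left ?_ hk)
    calc k * s = #(S.biUnion T) := hunion.symm
      _ ≤ #S * k := card_biUnion_le.trans hsum
      _ = k * #S := mul_comm _ _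
  · refine pairwiseDisjoint_of_sum_card_le_card_biUnion ?_
    calc ∑ i ∈ S, #(T i) ≤ #S * k := hsum
      _ ≤ s * k := Nat.mul_le_mul_right k hS
      _ = #(S.biUnion T) := by rw [hunion, mul_comm]

end General

section Items

variable {s r : ℕ}

/-- The small vertex `v_{T_i}^{k+1}`. -/
def smallItem (i : Fin r) (k : Fin 3) : X3CItem s r := ⟨3 * i + k, by omega⟩

/-- The big vertex `b_{j+1}`. -/
def bigItem (j : Fin s) : X3CItem s r := ⟨3 * r + j, by omega⟩

lemma eq_smallItem_or_eq_bigItem_or_eq_last (v : X3CItem s r) :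
    (∃ i k, v = smallItem i k) ∨ (∃ j, v = bigItem j) ∨ v = Fin.last _ := by
  rcases lt_or_ge (v : ℕ) (3 * r) with hsmall | hbig
  · exact .inl ⟨⟨v / 3, by omega⟩, ⟨v % 3, by omega⟩, Fin.ext (by simp only [smallItem]; omega)⟩
  rcases lt_or_ge (v : ℕ) (3 * r + s) with hlt | hlast
  · exact .inr (.inl ⟨⟨v - 3 * r, by omega⟩, Fin.ext (by simp only [bigItem]; omega)⟩)
  · exact .inr (.inr (Fin.ext (by simp only [Fin.val_last]; omega)))

lemma smallItem_inj {i i' : Fin r} {k k' : Fin 3} :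
    (smallItem i k : X3CItem s r) = smallItem i' k' ↔ i = i' ∧ k = k' := by
  simp only [smallItem, Fin.ext_iff]
  omega

lemma bigItem_inj {j j' : Fin s} : (bigItem j : X3CItem s r) = bigItem j' ↔ j = j' := by
  simp only [bigItem, Fin.ext_iff]
  omega

lemma smallItem_ne_bigItem (i : Fin r) (k : Fin 3) (j : Fin s) :
    (smallItem i k : X3CItem s r) ≠ bigItem j := by
  simp only [smallItem, bigItem, ne_eq, Fin.ext_iff]
  omega

lemma smallItem_ne_last (i : Fin r) (k : Fin 3) : (smallItem i k : X3CItem s r) ≠ Fin.last _ := by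
  simp only [smallItem, ne_eq, Fin.ext_iff, Fin.val_last]
  omega

lemma bigItem_ne_last (j : Fin s) : (bigItem j : X3CItem s r) ≠ Fin.last _ := by
  simp only [bigItem, ne_eq, Fin.ext_iff, Fin.val_last]
  omega

lemma preconnOn_pathGraph_range_smallItem (i : Fin r) :
    PreconnOn (SimpleGraph.pathGraph (3 * r + s + 1)) (Set.range (smallItem i)) := by
  refine preconnOn_range (H := SimpleGraph.pathGraph 3) ⟨smallItem i, fun {k l} hkl => ?_⟩
    (SimpleGraph.pathGraph_preconnected 3)
  simp only [SimpleGraph.pathGraph_adj, smallItem] at hkl ⊢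
  omega

end Items

section Utility

variable {s r : ℕ} (T : Fin r → Finset (Fin (3 * s)))

lemma x3cUtil_set_smallItem (i i' : Fin r) (k : Fin 3) :
    x3cUtil s r T (.inl i) (smallItem i' k) =
      if i' = i then 1 / (3 * ((3 * s + r + 1 : ℕ) : ℚ)) else 0 := by
  have hlt : 3 * (i' : ℕ) + k < 3 * r := by omega
  have hdiv : (3 * (i' : ℕ) + k) / 3 = i' := by omega
  have hlast : 3 * (i' : ℕ) + k ≠ 3 * r + s := by omega
  simp only [x3cUtil, smallItem, hdiv, Fin.ext_iff, hlt, true_and, not_le.2 hlt, false_and,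
    hlast, if_false]

lemma x3cUtil_set_bigItem (i : Fin r) (j : Fin s) :
    x3cUtil s r T (.inl i) (bigItem j) = 1 / ((3 * s + r + 1 : ℕ) : ℚ) := by
  simp [x3cUtil, bigItem]

lemma x3cUtil_element_smallItem (x : Fin (3 * s)) (i : Fin r) (k : Fin 3) :
    x3cUtil s r T (.inr (.inl x)) (smallItem i k) =
      if x ∈ T i then 1 / ((3 * s + r + 1 : ℕ) : ℚ) else 0 := by
  have hlt : 3 * (i : ℕ) + k < 3 * r := by omega
  have hdiv : (3 * (i : ℕ) + k) / 3 = i := by omega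
  have hlast : 3 * (i : ℕ) + k ≠ 3 * r + s := by omega
  simp only [x3cUtil, smallItem, hdiv, hlt, true_and, ← Fin.ext_iff, exists_eq_left,
    hlast, if_false]

lemma x3cUtil_element_bigItem (x : Fin (3 * s)) (j : Fin s) :
    x3cUtil s r T (.inr (.inl x)) (bigItem j) = 0 := by
  simp [x3cUtil, bigItem, j.2.ne]

lemma x3cUtil_dummy (t : Unit) (v : X3CItem s r) :
    x3cUtil s r T (.inr (.inr t)) v = if v = Fin.last _ then 1 else 0 := by
  simp only [x3cUtil, Fin.ext_iff, Fin.val_last]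

lemma setVal_x3cUtil_set_range_smallItem (i : Fin r) :
    setVal (x3cUtil s r T (.inl i)) (Set.range (smallItem i)) =
      1 / ((3 * s + r + 1 : ℕ) : ℚ) := by
  have hinj : Function.Injective (smallItem i : Fin 3 → X3CItem s r) :=
    fun _ _ h => (smallItem_inj.1 h).2
  rw [setVal, finsum_mem_range hinj, finsum_eq_sum_of_fintype]
  simp only [x3cUtil_set_smallItem, if_true, sum_const, card_univ, Fintype.card_fin, nsmul_eq_mul]
  field_simp
  norm_num

end Utility

section AllocationOfCover

variable {s r : ℕ} {T : Fin r → Finset (Fin (3 * s))} {S : Finset (Fin r)}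
  {b : S ≃ Fin s} {c : Fin (3 * s) → Fin r × Fin 3}

/-- The allocation built from an exact cover `S`: `b` assigns the big vertices to the set players
in `S`, and `c x` names the small vertex given to the player of the element `x`. -/
def coverAlloc (S : Finset (Fin r)) (b : S ≃ Fin s) (c : Fin (3 * s) → Fin r × Fin 3) :
    X3CPlayer s r → Set (X3CItem s r)
  | .inl i => if hi : i ∈ S then {bigItem (b ⟨i, hi⟩)} else Set.range (smallItem i)
  | .inr (.inl x) => {smallItem (c x).1 (c x).2}
  | .inr (.inr _) => {Fin.last _}

lemma smallItem_mem_coverAlloc {i : Fin r} {k : Fin 3} {p : X3CPlayer s r} :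
    smallItem i k ∈ coverAlloc S b c p ↔
      (p = .inl i ∧ i ∉ S) ∨ ∃ x, p = .inr (.inl x) ∧ c x = (i, k) := by
  rcases p with i' | x | t
  · by_cases hi' : i' ∈ S
    · have hne : i' = i → i ∈ S := fun h => h ▸ hi'
      simpa [coverAlloc, hi', smallItem_ne_bigItem] using hne
    · have hni : i' = i → i ∉ S := fun h => h ▸ hi'
      simpa [coverAlloc, hi', smallItem_inj] using hni
  · simp [coverAlloc, smallItem_inj, Prod.ext_iff, eq_comm]
  · simp [coverAlloc, smallItem_ne_last]

lemma bigItem_mem_coverAlloc {j : Fin s} {p : X3CPlayer s r} :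
    bigItem j ∈ coverAlloc S b c p ↔ p = .inl (b.symm j) := by
  rcases p with i | x | t
  · by_cases hi : i ∈ S
    · simp [coverAlloc, hi, bigItem_inj, Subtype.ext_iff, ← b.symm_apply_eq, eq_comm]
    · have hne : i ≠ b.symm j := fun h => hi (h ▸ (b.symm j).2)
      simp [coverAlloc, hi, hne, smallItem_ne_bigItem]
  · simp [coverAlloc, (smallItem_ne_bigItem _ _ _).symm]
  · simp [coverAlloc, bigItem_ne_last]

lemma last_mem_coverAlloc {p : X3CPlayer s r} :
    Fin.last _ ∈ coverAlloc S b c p ↔ p = .inr (.inr ()) := by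
  rcases p with i | x | t
  · by_cases hi : i ∈ S
    · simp [coverAlloc, hi, (bigItem_ne_last _).symm]
    · simp [coverAlloc, hi, smallItem_ne_last]
  · simp [coverAlloc, (smallItem_ne_last _ _).symm]
  · simp [coverAlloc]

lemma disjoint_coverAlloc (hcS : ∀ x, (c x).1 ∈ S) (hc : Function.Injective c)
    (p q : X3CPlayer s r) (hpq : p ≠ q) :
    Disjoint (coverAlloc S b c p) (coverAlloc S b c q) := by
  refine Set.disjoint_left.2 fun v hp hq => hpq ?_
  obtain ⟨i, k, rfl⟩ | ⟨j, rfl⟩ | rfl := eq_smallItem_or_eq_bigItem_or_eq_last v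
  · have mem_of_slot {x} (hx : c x = (i, k)) : i ∈ S := by simpa only [hx] using hcS x
    rw [smallItem_mem_coverAlloc] at hp hq
    obtain ⟨rfl, hi⟩ | ⟨x, rfl, hx⟩ := hp <;> obtain ⟨rfl, hi'⟩ | ⟨y, rfl, hy⟩ := hq
    · rfl
    · exact absurd (mem_of_slot hy) hi
    · exact absurd (mem_of_slot hx) hi'
    · rw [hc (hx.trans hy.symm)]
  · rw [bigItem_mem_coverAlloc] at hp hq
    exact hp.trans hq.symm
  · rw [last_mem_coverAlloc] at hp hq
    exact hp.trans hq.symm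

lemma preconnOn_coverAlloc {G : SimpleGraph (X3CItem s r)}
    (hG : ∀ i, PreconnOn G (Set.range (smallItem i))) (p : X3CPlayer s r) :
    PreconnOn G (coverAlloc S b c p) := by
  rcases p with i | x | _
  · by_cases hi : i ∈ S
    · simpa only [coverAlloc, hi, dite_true] using preconnOn_singleton G _
    · simpa only [coverAlloc, hi, dite_false] using hG i
  · exact preconnOn_singleton G _
  · exact preconnOn_singleton G _

lemma share_le_setVal_coverAlloc (hcT : ∀ x, x ∈ T (c x).1) (p : X3CPlayer s r) :
    1 / ((3 * s + r + 1 : ℕ) : ℚ) ≤ setVal (x3cUtil s r T p) (coverAlloc S b c p) := by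
  rcases p with i | x | t
  · by_cases hi : i ∈ S
    · simp only [coverAlloc, hi, dite_true, setVal_singleton, x3cUtil_set_bigItem, le_refl]
    · simp only [coverAlloc, hi, dite_false, setVal_x3cUtil_set_range_smallItem, le_refl]
  · simp only [coverAlloc, setVal_singleton, x3cUtil_element_smallItem, hcT, if_true, le_refl]
  · simp only [coverAlloc, setVal_singleton, x3cUtil_dummy, if_true]
    exact div_le_one_of_le₀ (by exact_mod_cast Nat.le_add_left 1 (3 * s + r)) (by positivity)

end AllocationOfCover

section CoverOfAllocation

variable {s r : ℕ} {T : Fin r → Finset (Fin (3 * s))}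

lemma smallItem_mem_of_share_le {i : Fin r} {X : Set (X3CItem s r)}
    (hbig : ∀ j, bigItem j ∉ X) (hlast : Fin.last _ ∉ X)
    (hshare : 1 / ((3 * s + r + 1 : ℕ) : ℚ) ≤ setVal (x3cUtil s r T (.inl i)) X) (k : Fin 3) :
    smallItem i k ∈ X := by
  by_contra hk
  have hle : setVal (x3cUtil s r T (.inl i)) X ≤
      ∑ v ∈ (univ.erase k).image (smallItem i), x3cUtil s r T (.inl i) v := by
    refine setVal_le_sum (fun v hv hne => ?_) (forall_mem_image.2 fun l _ => ?_)
    · obtain ⟨i', l, rfl⟩ | ⟨j, rfl⟩ | rfl := eq_smallItem_or_eq_bigItem_or_eq_last v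
      · obtain rfl : i' = i := by
          by_contra hi
          exact hne (by rw [x3cUtil_set_smallItem, if_neg hi])
        exact mem_image_of_mem _ (mem_erase.2 ⟨fun h => hk (h ▸ hv), mem_univ l⟩)
      · exact absurd hv (hbig j)
      · exact absurd hv hlast
    · rw [x3cUtil_set_smallItem, if_pos rfl]
      positivity
  have hsum : ∑ v ∈ (univ.erase k).image (smallItem i), x3cUtil s r T (.inl i) v =
      2 / 3 * (1 / ((3 * s + r + 1 : ℕ) : ℚ)) := by
    rw [sum_image fun _ _ _ _ h => (smallItem_inj.1 h).2]
    simp only [x3cUtil_set_smallItem, if_true, sum_const, card_erase_of_mem (mem_univ k),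
      card_univ, Fintype.card_fin, nsmul_eq_mul]
    field_simp
    norm_num
  have hpos : 0 < 1 / ((3 * s + r + 1 : ℕ) : ℚ) := by positivity
  linarith

lemma last_mem_of_dummy_setVal_pos {X : Set (X3CItem s r)}
    (h : 0 < setVal (x3cUtil s r T (.inr (.inr ()))) X) : Fin.last _ ∈ X := by
  obtain ⟨v, hv, hne⟩ := exists_mem_ne_zero_of_setVal_pos h
  rw [x3cUtil_dummy] at hne
  obtain rfl : v = Fin.last _ := of_not_not fun hv => hne (if_neg hv)
  exact hv

lemma exists_smallItem_mem_of_element_setVal_pos {x : Fin (3 * s)} {X : Set (X3CItem s r)}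
    (hlast : Fin.last _ ∉ X) (h : 0 < setVal (x3cUtil s r T (.inr (.inl x))) X) :
    ∃ i k, smallItem i k ∈ X ∧ x ∈ T i := by
  obtain ⟨v, hv, hne⟩ := exists_mem_ne_zero_of_setVal_pos h
  obtain ⟨i, k, rfl⟩ | ⟨j, rfl⟩ | rfl := eq_smallItem_or_eq_bigItem_or_eq_last v
  · rw [x3cUtil_element_smallItem] at hne
    exact ⟨i, k, hv, of_not_not fun hx => hne (if_neg hx)⟩
  · exact absurd (x3cUtil_element_bigItem T x j) hne
  · exact absurd hv hlast

lemma card_filter_exists_bigItem_mem_le {π : X3CPlayer s r → Set (X3CItem s r)}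
    [DecidablePred fun i => ∃ j, bigItem j ∈ π (.inl i)]
    (hdisj : ∀ p q, p ≠ q → Disjoint (π p) (π q)) :
    #{i | ∃ j, bigItem j ∈ π (.inl i)} ≤ s := by
  calc #{i | ∃ j, bigItem j ∈ π (.inl i)} ≤ #(univ : Finset (Fin s)) := by
        refine card_le_card_of_forall_subsingleton (fun i j => bigItem j ∈ π (.inl i))
          (fun i hi => by simpa using hi) fun j _ i hi i' hi' => ?_
        by_contra hne
        exact Set.disjoint_left.1 (hdisj _ _ (Sum.inl_injective.ne hne)) hi.2 hi'.2
    _ = s := card_fin s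

lemma exists_cover_of_proportional {π : X3CPlayer s r → Set (X3CItem s r)}
    (hdisj : ∀ p q, p ≠ q → Disjoint (π p) (π q))
    (hprop : ∀ p, 1 / ((3 * s + r + 1 : ℕ) : ℚ) ≤ setVal (x3cUtil s r T p) (π p)) :
    ∃ S : Finset (Fin r), #S ≤ s ∧ S.biUnion T = univ := by
  classical
  have hpos p : 0 < setVal (x3cUtil s r T p) (π p) := lt_of_lt_of_le (by positivity) (hprop p)
  have hlast p (hp : p ≠ .inr (.inr ())) : Fin.last _ ∉ π p := fun h =>
    Set.disjoint_left.1 (hdisj _ _ hp) h (last_mem_of_dummy_setVal_pos (hpos _))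
  refine ⟨univ.filter fun i => ∃ j, bigItem j ∈ π (.inl i),
    card_filter_exists_bigItem_mem_le hdisj, eq_univ_of_forall fun x => ?_⟩
  obtain ⟨i, k, hikx, hxi⟩ :=
    exists_smallItem_mem_of_element_setVal_pos (hlast (.inr (.inl x)) (by simp)) (hpos _)
  refine mem_biUnion.2 ⟨i, ?_, hxi⟩
  by_contra hi
  have hbig : ∀ j, bigItem j ∉ π (.inl i) := by simpa using hi
  have hiki : smallItem i k ∈ π (.inl i) :=
    smallItem_mem_of_share_le hbig (hlast _ (by simp)) (hprop _) k
  exact Set.disjoint_left.1 (hdisj _ _ (by simp)) hiki hikx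

end CoverOfAllocation

theorem x3c_iff_proportional_on_path_general {s r : ℕ} {T : Fin r → Finset (Fin (3 * s))}
    (hT : ∀ i, #(T i) = 3) {G : SimpleGraph (X3CItem s r)}
    (hG : ∀ i : Fin r, PreconnOn G (Set.range (smallItem i))) :
    (∃ S : Finset (Fin r), #S = s ∧ (∀ i ∈ S, ∀ j ∈ S, i ≠ j → Disjoint (T i) (T j)) ∧
        S.biUnion T = univ) ↔
      ∃ π : X3CPlayer s r → Set (X3CItem s r), ValidAlloc G π ∧
        ∀ p, 1 / ((3 * s + r + 1 : ℕ) : ℚ) ≤ setVal (x3cUtil s r T p) (π p) := by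
  constructor
  · rintro ⟨S, hS, -, hcov⟩
    obtain ⟨c, hc, hcST⟩ := exists_injective_slot_of_cover (S := S) (fun i => (hT i).le)
      fun x => mem_biUnion.1 (hcov ▸ mem_univ x)
    exact ⟨coverAlloc S (S.equivFinOfCardEq hS) c,
      ⟨preconnOn_coverAlloc hG, disjoint_coverAlloc (fun x => (hcST x).1) hc⟩,
      share_le_setVal_coverAlloc fun x => (hcST x).2⟩
  · rintro ⟨π, ⟨-, hdisj⟩, hprop⟩
    obtain ⟨S, hS, hcov⟩ := exists_cover_of_proportional hdisj hprop
    obtain ⟨hcard, hpair⟩ := card_eq_and_pairwiseDisjoint_of_cover three_pos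
      (Fintype.card_fin _) (fun i => (hT i).le) hS hcov
    exact ⟨S, hcard, fun i hi j hj hij => hpair hi hj hij, hcov⟩

/-- X3C reduces to proportional connected fair division on a path: the set
`X = Fin (3s)` has an exact cover by `s` of the sets `T_1, …, T_r` iff the constructed
CFD instance admits a proportional valid allocation. -/
theorem x3c_iff_proportional_on_path (s r : ℕ) (hsr : s ≤ r)
    (T : Fin r → Finset (Fin (3 * s))) (hT : ∀ i, (T i).card = 3)
    (hfreq : ∀ x : Fin (3 * s),
      3 * (Finset.univ.filter (fun i => x ∈ T i)).card ≤ 3 * s + r + 1) :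
    (∃ S : Finset (Fin r), S.card = s ∧
        (∀ i ∈ S, ∀ j ∈ S, i ≠ j → Disjoint (T i) (T j)) ∧
        S.biUnion T = Finset.univ) ↔
      (∃ π : X3CPlayer s r → Set (X3CItem s r),
        ValidAlloc (SimpleGraph.pathGraph (3 * r + s + 1)) π ∧
        ∀ p, 1 / ((3 * s + r + 1 : ℕ) : ℚ) ≤ setVal (x3cUtil s r T p) (π p)) :=
  x3c_iff_proportional_on_path_general hT preconnOn_pathGraph_range_smallItem
end

section
/- Let a_1, …, a_h be positive integers with Σ_{i=1}^h a_i = 2k for a positive integer k. Construct the CFD instance I = (G, N, 𝒰) where G = (V, E), V = {v_1, …, v_h, w_1, w_2}, E = {{v_i, w_1} : i ∈ [h]} ∪ {{v_i, w_2} : i ∈ [h]} (a bipartite graph), N = {1, 2}, and both players have the same utility u with u(v_i) = a_i/(2k) for i ∈ [h] and u(w_1) = u(w_2) = 0. Then I admits a proportional valid allocation (each of the two players receives a connected bundle of value at least 1/2) if and only if there exists H' ⊆ [h] with Σ_{i ∈ H'} a_i = k. -/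
/-!
The vertices on the right are worthless, so the value of a bundle is the weight of its left
vertices. A colouring of the left vertices by the players becomes a valid allocation once each
colour class is joined to a right vertex of its own: the bundle is then a star. Conversely, the
bundles of an allocation are disjoint, so they extend to such a colouring; if every colour class
weighs at least the average, then every class weighs exactly the average. For two players, a
colouring with equal class weights is a subset of half the total weight.
-/

theorem setVal_sumElim_zero {ι κ : Type*} [Fintype ι] (u : ι → ℚ) (X : Set (ι ⊕ κ))
    [DecidablePred fun i => Sum.inl i ∈ X] :
    setVal (Sum.elim u fun _ => 0) X = ∑ i with Sum.inl i ∈ X, u i := by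
  have hsupport : X ∩ Function.support (Sum.elim u fun _ => 0) =
      ↑(({i | Sum.inl i ∈ X} : Finset ι).map Function.Embedding.inl : Finset (ι ⊕ κ)) ∩
        Function.support (Sum.elim u fun _ => 0) := by
    ext (i | r) <;> simp
  rw [setVal, finsum_mem_eq_sum_of_inter_support_eq _ hsupport, Finset.sum_map]
  rfl

section Connectivity

theorem preconnOn_of_forall_adj {V : Type*} {G : SimpleGraph V} {X : Set V} {c : V} (hc : c ∈ X)
    (hadj : ∀ x ∈ X, x ≠ c → G.Adj x c) : PreconnOn G X := by
  have reachable_center (x : X) : (G.induce X).Reachable x ⟨c, hc⟩ := by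
    rcases eq_or_ne x ⟨c, hc⟩ with rfl | hne
    · exact .refl _
    · exact SimpleGraph.Adj.reachable (hadj x x.2 (Subtype.coe_ne_coe.2 hne))
  exact fun x y => (reachable_center x).trans (reachable_center y).symm

variable {ι N : Type*} (c : ι → N)

theorem preconnOn_completeBipartiteGraph_fiber (p : N) :
    PreconnOn (completeBipartiteGraph ι N) (Sum.elim c id ⁻¹' {p}) := by
  refine preconnOn_of_forall_adj (c := Sum.inr p) rfl ?_
  rintro (i | r) hx hne
  · simp
  · exact absurd (congrArg Sum.inr hx) hne

theorem validAlloc_completeBipartiteGraph_fibers :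
    ValidAlloc (completeBipartiteGraph ι N) fun p => Sum.elim c id ⁻¹' {p} :=
  ⟨preconnOn_completeBipartiteGraph_fiber c,
    fun _ _ hpq => (Set.disjoint_singleton.2 hpq).preimage _⟩

end Connectivity

section Colorings

variable {ι N M : Type*}

theorem exists_coloring_of_pairwise_disjoint [Nonempty N] {A : N → Set ι}
    (hA : Pairwise (Function.onFun Disjoint A)) : ∃ c : ι → N, ∀ p, ∀ i ∈ A p, c i = p := by
  have exists_color (i : ι) : ∃ q, ∀ p, i ∈ A p → q = p := by
    by_cases hi : ∃ q, i ∈ A q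
    · obtain ⟨q, hq⟩ := hi
      exact ⟨q, fun p hp => hA.eq (Set.not_disjoint_iff.2 ⟨i, hq, hp⟩)⟩
    · exact ⟨Classical.arbitrary N, fun p hp => absurd ⟨p, hp⟩ hi⟩
  choose c hc using exists_color
  exact ⟨c, fun p i => hc i p⟩

theorem sum_fiber_eq_of_forall_le [Fintype ι] [Fintype N] [DecidableEq N] [AddCommMonoid M]
    [PartialOrder M] [IsOrderedCancelAddMonoid M] {u : ι → M} {t : M}
    (hu : ∑ i, u i = Fintype.card N • t) {c : ι → N} (hc : ∀ p, t ≤ ∑ i with c i = p, u i)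
    (p : N) : ∑ i with c i = p, u i = t := by
  have htotal : ∑ _p : N, t = ∑ p, ∑ i with c i = p, u i := by
    rw [Finset.sum_fiberwise, hu, Finset.sum_const, Finset.card_univ]
  exact ((Finset.sum_eq_sum_iff_of_le fun p _ => hc p).1 htotal p (Finset.mem_univ p)).symm

theorem exists_two_coloring_sum_eq_iff [Fintype ι] [AddCancelCommMonoid M] {u : ι → M} {t : M}
    (hu : ∑ i, u i = 2 • t) :
    (∃ c : ι → Fin 2, ∀ p, ∑ i with c i = p, u i = t) ↔ ∃ H : Finset ι, ∑ i ∈ H, u i = t := by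
  classical
  refine ⟨fun ⟨c, hc⟩ => ⟨_, hc 0⟩, fun ⟨H, hH⟩ => ⟨fun i => if i ∈ H then 0 else 1, ?_⟩⟩
  have hcompl : ∑ i ∈ Hᶜ, u i = t := by
    rw [← add_right_inj (∑ i ∈ H, u i), Finset.sum_add_sum_compl, hu, hH, two_nsmul]
  rw [Fin.forall_fin_two]
  constructor
  · simpa using hH
  · simpa [Finset.filter_notMem_eq_sdiff, ← Finset.compl_eq_univ_sdiff] using hcompl

end Colorings

theorem sum_div_two_mul_eq_half_iff {ι K : Type*} [Semifield K] [CharZero K] {k : ℕ} (hk : k ≠ 0)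
    (a : ι → ℕ) (s : Finset ι) :
    ∑ i ∈ s, (a i : K) / (2 * (k : K)) = 1 / 2 ↔ ∑ i ∈ s, a i = k := by
  rw [← Finset.sum_div, ← Nat.cast_sum, div_eq_div_iff (by simpa using hk) two_ne_zero, one_mul,
    mul_comm, mul_right_inj' two_ne_zero, Nat.cast_inj]

theorem partition_iff_proportional_bipartite_general {ι N : Type*} [Fintype ι] [Fintype N]
    [Nonempty N] [DecidableEq N] {u : ι → ℚ} {t : ℚ} (hnonneg : ∀ i, 0 ≤ u i)
    (hsum : ∑ i, u i = Fintype.card N • t) :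
    (∃ π : N → Set (ι ⊕ N), ValidAlloc (completeBipartiteGraph ι N) π ∧
        ∀ p, t ≤ setVal (Sum.elim u fun _ => 0) (π p)) ↔
      ∃ c : ι → N, ∀ p, ∑ i with c i = p, u i = t := by
  classical
  simp only [setVal_sumElim_zero]
  constructor
  · rintro ⟨π, ⟨-, hdisj⟩, hval⟩
    obtain ⟨c, hc⟩ := exists_coloring_of_pairwise_disjoint
      (A := fun p => Sum.inl ⁻¹' π p) fun p q hpq => (hdisj p q hpq).preimage _
    have hclass (p : N) : t ≤ ∑ i with c i = p, u i :=
      (hval p).trans <| Finset.sum_le_sum_of_subset_of_nonneg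
        (Finset.monotone_filter_right _ fun i _ => hc p i) fun i _ _ => hnonneg i
    exact ⟨c, sum_fiber_eq_of_forall_le hsum hclass⟩
  · rintro ⟨c, hc⟩
    exact ⟨_, validAlloc_completeBipartiteGraph_fibers c, fun p => by simpa using (hc p).ge⟩

/-- Partition reduces to proportional connected fair division on a complete bipartite
graph: with items `v_1, …, v_h` (left) and `w_1, w_2` (right), two players sharing the
utility `u(v_i) = a_i / 2k`, `u(w_1) = u(w_2) = 0`, a proportional valid allocation exists
iff some subset of the `a_i` sums to `k`. -/
theorem partition_iff_proportional_bipartite (h k : ℕ) (hk : 1 ≤ k)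
    (a : Fin h → ℕ) (hpos : ∀ i, 0 < a i) (hsum : ∑ i, a i = 2 * k) :
    (∃ π : Fin 2 → Set (Fin h ⊕ Fin 2),
        ValidAlloc (completeBipartiteGraph (Fin h) (Fin 2)) π ∧
        ∀ p, (1 : ℚ) / 2 ≤
          setVal (Sum.elim (fun i => (a i : ℚ) / (2 * (k : ℚ))) (fun _ => 0)) (π p)) ↔
      (∃ H' : Finset (Fin h), ∑ i ∈ H', a i = k) := by
  have hk0 : k ≠ 0 := Nat.one_le_iff_ne_zero.1 hk
  have htotal : ∑ i, (a i : ℚ) / (2 * (k : ℚ)) = 2 • (1 / 2) := by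
    rw [← Finset.sum_div, ← Nat.cast_sum, hsum, Nat.cast_mul, Nat.cast_two,
      div_self (by positivity), two_nsmul, add_halves]
  rw [partition_iff_proportional_bipartite_general (fun i => by positivity) (by simpa using htotal),
    exists_two_coloring_sum_eq_iff htotal]
  exact exists_congr (sum_div_two_mul_eq_half_iff hk0 a)
end

section
/- Consider the CFD instance I = (G, N, 𝒰) where G is the cycle on vertices v_1, …, v_8 (edges {v_i, v_{i+1}} for i ∈ [7] and {v_1, v_8}), N = {1, 2, 3, 4}, players 1 and 2 share the utility u with values (1, 4, 4, 1, 3, 2, 2, 3)/20 on (v_1, …, v_8), and players 3 and 4 share the utility u' with values (4, 4, 1, 3, 2, 2, 3, 1)/20 on (v_1, …, v_8). Then mms_i(I) = 1/4 for every player i ∈ {1, 2, 3, 4}. -/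
/-- The cycle on the eight vertices `v_1, …, v_8` (vertex `v_j` is `j - 1 : Fin 8`),
with edges `{v_j, v_{j+1}}` for `j ∈ [7]` and the edge `{v_1, v_8}`. -/
def cycle8 : SimpleGraph (Fin 8) :=
  SimpleGraph.fromRel (fun x y => (x : ℕ) + 1 = (y : ℕ) ∨ ((x : ℕ) = 7 ∧ (y : ℕ) = 0))

/-- The common utility of players 1 and 2: values `(1,4,4,1,3,2,2,3)/20` on `v_1, …, v_8`. -/
def utilA : Fin 8 → ℚ := fun v => ![1, 4, 4, 1, 3, 2, 2, 3] v / 20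

/-- The common utility of players 3 and 4: values `(4,4,1,3,2,2,3,1)/20` on `v_1, …, v_8`. -/
def utilB : Fin 8 → ℚ := fun v => ![4, 4, 1, 3, 2, 2, 3, 1] v / 20

/-!
Cutting the cycle into the edges `{v₁, v₂}, {v₃, v₄}, {v₅, v₆}, {v₇, v₈}` splits `utilA` into four
equal shares of `5/20`. Since `utilB` is `utilA` shifted by one vertex, the edges
`{v₈, v₁}, {v₂, v₃}, {v₄, v₅}, {v₆, v₇}` do the same for `utilB`. The values of the parts have the
same sum for every partition, so the worst part of any other partition is worth no more than the
common value of the parts of an equal one.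
-/

variable {V : Type*} {n : ℕ} {G : SimpleGraph V} {u : V → ℚ} {c : ℚ}

/-- `c` is the maximin share, in the graph `G` shared by `n` players, of a player with utility `u`.
The maximum over partitions is expressed by attainment and an upper bound, so that no junk value
is involved when `G` has no partition into `n` connected parts. -/
def IsMaximinShare (G : SimpleGraph V) (n : ℕ) (u : V → ℚ) (c : ℚ) : Prop :=
  (∃ P : Fin n → Set V, IsConnPartition G P ∧ ∀ j, c ≤ setVal u (P j)) ∧
    ∀ P : Fin n → Set V, IsConnPartition G P → ∃ j, setVal u (P j) ≤ c

namespace IsConnPartition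

theorem sum_setVal [Finite V] {P : Fin n → Set V} (hP : IsConnPartition G P) :
    ∑ j, setVal u (P j) = setVal u Set.univ := by
  obtain ⟨-, -, hdisj, hcover⟩ := hP
  rw [← hcover, ← finsum_eq_sum_of_fintype]
  exact (finsum_mem_iUnion hdisj fun j => Set.toFinite (P j)).symm

theorem isMaximinShare_of_setVal_eq [Finite V] [NeZero n] {P : Fin n → Set V}
    (hP : IsConnPartition G P) (hval : ∀ j, setVal u (P j) = c) : IsMaximinShare G n u c := by
  refine ⟨⟨P, hP, fun j => (hval j).ge⟩, fun Q hQ => ?_⟩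
  have hsum : ∑ j, setVal u (Q j) ≤ ∑ j, setVal u (P j) :=
    (hQ.sum_setVal.trans hP.sum_setVal.symm).le
  obtain ⟨j, -, hj⟩ := Finset.exists_le_of_sum_le Finset.univ_nonempty hsum
  exact ⟨j, hj.trans_eq (hval j)⟩

end IsConnPartition

theorem isConnPartition_pair_of_adj {a b : Fin n → V} (hadj : ∀ j, G.Adj (a j) (b j))
    (hbij : Function.Bijective (Sum.elim a b)) :
    IsConnPartition G fun j => ({a j, b j} : Set V) := by
  obtain ⟨hinj, hsurj⟩ := hbij
  obtain ⟨ha, hb, hab⟩ := Sum.elim_injective.mp hinj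
  refine ⟨fun j => Set.insert_nonempty _ _,
    fun j => SimpleGraph.induce_pair_connected_of_adj (hadj j), fun j k hjk => ?_, ?_⟩
  · simp [ha.ne hjk.symm, hb.ne hjk.symm, hab k j, (hab j k).symm]
  · refine Set.eq_univ_of_forall fun v => Set.mem_iUnion.mpr ?_
    obtain ⟨j | j, rfl⟩ := hsurj v
    exacts [⟨j, Or.inl rfl⟩, ⟨j, Or.inr rfl⟩]

theorem isMaximinShare_of_perfect_matching [NeZero n] {a b : Fin n → V}
    (hadj : ∀ j, G.Adj (a j) (b j)) (hbij : Function.Bijective (Sum.elim a b))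
    (hval : ∀ j, u (a j) + u (b j) = c) : IsMaximinShare G n u c :=
  have : Finite V := Finite.of_surjective _ hbij.surjective
  (isConnPartition_pair_of_adj hadj hbij).isMaximinShare_of_setVal_eq fun j =>
    (finsum_mem_pair (hadj j).ne).trans (hval j)

theorem cycle8_adj_add_one (v : Fin 8) : cycle8.Adj v (v + 1) := by
  fin_cases v <;> simp [cycle8]

theorem utilB_eq_utilA_add_one (v : Fin 8) : utilB v = utilA (v + 1) := by
  fin_cases v <;> rfl

theorem utilA_even_add_utilA_odd (j : Fin 4) :
    utilA (![0, 2, 4, 6] j) + utilA (![0, 2, 4, 6] j + 1) = 1 / 4 := by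
  fin_cases j <;> simp only [utilA, Matrix.cons_val, Fin.reduceFinMk, Fin.reduceAdd] <;> norm_num

/-- In the cycle instance with four players (players 1 and 2 with utility `utilA`, players
3 and 4 with utility `utilB`), every player's maximin share equals `1/4`: there is a
partition into 4 nonempty connected parts each of value at least `1/4` to her, and every
such partition has a part of value at most `1/4` to her. -/
theorem mms_on_cycle_eq_quarter :
    ∀ u ∈ ({utilA, utilA, utilB, utilB} : Set (Fin 8 → ℚ)),
      (∃ P : Fin 4 → Set (Fin 8), IsConnPartition cycle8 P ∧
          ∀ j, (1 : ℚ) / 4 ≤ setVal u (P j)) ∧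
        (∀ P : Fin 4 → Set (Fin 8), IsConnPartition cycle8 P →
          ∃ j, setVal u (P j) ≤ (1 : ℚ) / 4) := by
  have hA : IsMaximinShare cycle8 4 utilA (1 / 4) :=
    isMaximinShare_of_perfect_matching (fun j => cycle8_adj_add_one (![0, 2, 4, 6] j))
      (by decide) utilA_even_add_utilA_odd
  have hB : IsMaximinShare cycle8 4 utilB (1 / 4) :=
    isMaximinShare_of_perfect_matching (fun j => cycle8_adj_add_one (![0, 2, 4, 6] j - 1))
      (by decide) fun j => by
        simpa only [utilB_eq_utilA_add_one, sub_add_cancel] using utilA_even_add_utilA_odd j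
  rintro u (rfl | rfl | rfl | rfl)
  exacts [hA, hA, hB, hB]
end

section
/- Consider the CFD instance I = (G, N, 𝒰) where G is the cycle on vertices v_1, …, v_8 (edges {v_i, v_{i+1}} for i ∈ [7] and {v_1, v_8}), N = {1, 2, 3, 4}, players 1 and 2 share the utility u with values (1, 4, 4, 1, 3, 2, 2, 3)/20 on (v_1, …, v_8), and players 3 and 4 share the utility u' with values (4, 4, 1, 3, 2, 2, 3, 1)/20 on (v_1, …, v_8). Then there is no valid allocation π such that u_i(π(i)) ≥ 1/4 for every player i ∈ {1, 2, 3, 4}. -/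
/-!
No single item is worth `1/4` to anyone, so each of the four disjoint bundles has at least two of
the eight items. Hence each has exactly two, is an arc `{x, x + 1}` by connectivity, and the four
arcs tile the cycle; they form one of its two perfect matchings, distinguished by the parity of `x`.
If the starting points are odd in `Fin 8`, the matching is `{v_2 v_3, v_4 v_5, v_6 v_7, v_8 v_1}`,
with values `(8, 4, 4, 4)/20` under `utilA`, so players 1 and 2 would have to share the first arc.
If they are even, it is `{v_1 v_2, v_3 v_4, v_5 v_6, v_7 v_8}`, with the same values under `utilB`,
so players 3 and 4 would have to share the first arc.
-/

section Bundles

variable {V : Type*}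

lemma setVal_pair (u : V → ℚ) {a b : V} (hab : a ≠ b) : setVal u {a, b} = u a + u b :=
  finsum_mem_pair hab

lemma nontrivial_of_le_setVal_of_forall_lt {u : V → ℚ} {X : Set V} {c : ℚ} (hc : 0 < c)
    (hu : ∀ v ∈ X, u v < c) (hX : c ≤ setVal u X) : X.Nontrivial := by
  by_contra htriv
  rcases (Set.not_nontrivial_iff.mp htriv).eq_empty_or_singleton with rfl | ⟨v, rfl⟩
  · exact hX.not_gt (by simpa [setVal] using hc)
  · exact hX.not_gt (by simpa [setVal] using hu v rfl)

lemma ValidAlloc.injective {G : SimpleGraph V} {N : Type*} {π : N → Set V} (hπ : ValidAlloc G π)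
    (hne : ∀ i, (π i).Nonempty) : Function.Injective π := by
  intro i j hij
  by_contra hne_ij
  exact (hne i).ne_empty (disjoint_self.mp (hij ▸ hπ.2 i j hne_ij))

lemma PreconnOn.adj_of_pair {G : SimpleGraph V} {a b : V} (h : PreconnOn G {a, b})
    (hab : a ≠ b) : G.Adj a b := by
  have : Nontrivial ({a, b} : Set V) := (Set.nontrivial_pair hab).coe_sort
  obtain ⟨⟨c, rfl | rfl⟩, hadj⟩ := h.exists_adj_of_nontrivial ⟨a, Set.mem_insert a {b}⟩
  · exact absurd hadj (SimpleGraph.irrefl _)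
  · exact hadj

lemma ncard_eq_and_iUnion_eq_univ_of_card_le [Finite V] {ι : Type*} [Fintype ι] {s : ι → Set V}
    {k : ℕ} (hdisj : Pairwise fun i j => Disjoint (s i) (s j)) (hk : ∀ i, k ≤ (s i).ncard)
    (hcard : Nat.card V ≤ Fintype.card ι * k) :
    (∀ i, (s i).ncard = k) ∧ ⋃ i, s i = Set.univ := by
  have hunion : (⋃ i, s i).ncard = ∑ i, (s i).ncard := by
    rw [Set.ncard_iUnion_of_finite (fun i => (s i).toFinite) hdisj, finsum_eq_sum_of_fintype]
  have hconst : ∑ _i : ι, k = Fintype.card ι * k := by simp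
  have hle : ∑ _i : ι, k ≤ ∑ i, (s i).ncard := Finset.sum_le_sum fun i _ => hk i
  have hV : (⋃ i, s i).ncard ≤ Nat.card V := Set.ncard_le_card _
  constructor
  · have heq : ∑ _i : ι, k = ∑ i, (s i).ncard := by lia
    exact fun i => ((Finset.sum_eq_sum_iff_of_le fun i _ => hk i).mp heq i (Finset.mem_univ i)).symm
  · exact (Set.eq_univ_iff_ncard _).mpr (by lia)

end Bundles

section Arcs

variable {A ι : Type*}

lemma PreconnOn.exists_eq_pair_add [AddCommGroup A] {g : A} {X : Set A}
    (h : PreconnOn (SimpleGraph.circulantGraph {g}) X) (hX : X.ncard = 2) :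
    ∃ x, X = {x, x + g} := by
  obtain ⟨a, b, hab, rfl⟩ := Set.ncard_eq_two.mp hX
  obtain ⟨-, hsub | hsub⟩ := (SimpleGraph.fromRel_adj _ _ _).mp (h.adj_of_pair hab)
  · exact ⟨b, by rw [← eq_add_of_sub_eq' hsub, Set.pair_comm]⟩
  · exact ⟨a, by rw [← eq_add_of_sub_eq' hsub]⟩

lemma add_mem_range_iff_notMem_of_tiling [AddCancelMonoid A] {g : A} (hg : g ≠ 0) {x : ι → A}
    (hdisj : Pairwise fun i j => Disjoint ({x i, x i + g} : Set A) {x j, x j + g})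
    (hcover : ⋃ i, ({x i, x i + g} : Set A) = Set.univ) (y : A) :
    y + g ∈ Set.range x ↔ y ∉ Set.range x := by
  constructor
  · rintro ⟨j, hj⟩ ⟨i, rfl⟩
    have hij : i ≠ j := by
      rintro rfl
      exact hg (left_eq_add.mp hj)
    exact Set.disjoint_left.mp (hdisj hij) (Set.mem_insert_of_mem _ rfl) (.inl hj.symm)
  · intro hy
    obtain ⟨i, hi | hi⟩ := Set.mem_iUnion.mp (hcover ▸ Set.mem_univ (y + g))
    · exact ⟨i, hi.symm⟩
    · exact absurd ⟨i, (add_right_cancel hi).symm⟩ hy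

lemma add_zsmul_mem_iff_even [AddGroup A] {g : A} {S : Set A} (hS : ∀ y, y + g ∈ S ↔ y ∉ S)
    {x : A} (hx : x ∈ S) (k : ℤ) : x + k • g ∈ S ↔ Even k := by
  have hstep (m : ℤ) : x + (m + 1) • g ∈ S ↔ x + m • g ∉ S := by
    rw [add_zsmul, one_zsmul, ← add_assoc, hS]
  induction k with
  | zero => simpa using hx
  | succ m ih => exact (hstep m).trans (ih.not.trans Int.even_add_one.symm)
  | pred m ih =>
    have hpred : x + (-m - 1 : ℤ) • g ∉ S ↔ ¬ Even (-m - 1 : ℤ) := by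
      rw [← hstep, ← Int.even_add_one, sub_add_cancel]
      exact ih
    exact not_iff_not.mp hpred

lemma even_iff_even_of_tiling [AddCommGroup A] {g : A}
    (hgen : ∀ a : A, a ∈ AddSubgroup.zmultiples g) {x : ι → A}
    (hdisj : Pairwise fun i j => Disjoint ({x i, x i + g} : Set A) {x j, x j + g})
    (hcover : ⋃ i, ({x i, x i + g} : Set A) = Set.univ) (i j : ι) :
    Even (x i) ↔ Even (x j) := by
  obtain ⟨k, hk⟩ := AddSubgroup.mem_zmultiples_iff.mp (hgen (x j - x i))
  have hxj : x j = x i + k • g := by rw [hk, add_sub_cancel]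
  obtain rfl | hg := eq_or_ne g 0
  · rw [hxj, zsmul_zero, add_zero]
  have hk_even : Even k :=
    (add_zsmul_mem_iff_even (add_mem_range_iff_notMem_of_tiling hg hdisj hcover) ⟨i, rfl⟩ k).mp
      ⟨j, hxj⟩
  have hkg : Even (k • g) := by
    obtain ⟨m, rfl⟩ := hk_even
    exact ⟨m • g, add_zsmul g m m⟩
  rw [hxj]
  exact ⟨fun h => h.add hkg, fun h => by simpa using h.sub hkg⟩

/-- When `g` generates `A`, `circulantGraph {g}` is a cycle, and the common parity of the starting
points `x i` says which of its two perfect matchings the bundles form. -/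
theorem ValidAlloc.exists_arcs_of_nontrivial [AddCommGroup A] [Finite A] [Fintype ι] {g : A}
    {π : ι → Set A} (hπ : ValidAlloc (SimpleGraph.circulantGraph {g}) π)
    (hnontriv : ∀ i, (π i).Nontrivial)
    (hcard : Nat.card A ≤ Fintype.card ι * 2)
    (hgen : ∀ a : A, a ∈ AddSubgroup.zmultiples g) :
    ∃ x : ι → A, (∀ i, π i = {x i, x i + g}) ∧ ∀ i j, Even (x i) ↔ Even (x j) := by
  have hdisj : Pairwise fun i j => Disjoint (π i) (π j) := hπ.2
  obtain ⟨htwo, hcover⟩ := ncard_eq_and_iUnion_eq_univ_of_card_le hdisj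
    (fun i => Set.one_lt_ncard_iff_nontrivial.mpr (hnontriv i)) hcard
  choose x hx using fun i => (hπ.1 i).exists_eq_pair_add (htwo i)
  simp only [hx] at hdisj hcover
  exact ⟨x, hx, even_iff_even_of_tiling hgen hdisj hcover⟩

end Arcs

lemma cycle8_eq_circulantGraph : cycle8 = SimpleGraph.circulantGraph {1} := by
  ext x y
  simp only [cycle8, SimpleGraph.circulantGraph, SimpleGraph.fromRel_adj, Set.mem_singleton_iff]
  revert x y
  decide

lemma mem_zmultiples_fin_one {n : ℕ} [NeZero n] (a : Fin n) :
    a ∈ AddSubgroup.zmultiples (1 : Fin n) := by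
  open Fin.CommRing in
  exact AddSubgroup.mem_zmultiples_iff.mpr ⟨a.val, by simp⟩

lemma utilA_lt_quarter (v : Fin 8) : utilA v < 1 / 4 := by
  fin_cases v <;> norm_num [utilA]

lemma utilB_lt_quarter (v : Fin 8) : utilB v < 1 / 4 := by
  fin_cases v <;> norm_num [utilB]

lemma eq_one_of_quarter_le_setVal_utilA {x : Fin 8} (hx : ¬ Even x)
    (h : 1 / 4 ≤ setVal utilA {x, x + 1}) : x = 1 := by
  have hcases : ∀ y : Fin 8, ¬ Even y.val → y = 1 ∨ y = 3 ∨ y = 5 ∨ y = 7 := by decide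
  rw [Fin.even_iff_of_even (by decide)] at hx
  rw [setVal_pair _ (by simp)] at h
  rcases hcases x hx with rfl | rfl | rfl | rfl
  · rfl
  all_goals
    simp only [utilA, Fin.reduceAdd, Fin.isValue, Matrix.cons_val] at h
    norm_num at h

lemma eq_zero_of_quarter_le_setVal_utilB {x : Fin 8} (hx : Even x)
    (h : 1 / 4 ≤ setVal utilB {x, x + 1}) : x = 0 := by
  have hcases : ∀ y : Fin 8, Even y.val → y = 0 ∨ y = 2 ∨ y = 4 ∨ y = 6 := by decide
  rw [Fin.even_iff_of_even (by decide)] at hx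
  rw [setVal_pair _ (by simp)] at h
  rcases hcases x hx with rfl | rfl | rfl | rfl
  · rfl
  all_goals
    simp only [utilB, Fin.reduceAdd, Fin.isValue, Matrix.cons_val] at h
    norm_num at h

/-- In the cycle instance with four players (players 1 and 2 with utility `utilA`, players
3 and 4 with utility `utilB`), no valid allocation gives every player value at least `1/4`. -/
theorem no_quarter_allocation_on_cycle :
    ¬ ∃ π : Fin 4 → Set (Fin 8), ValidAlloc cycle8 π ∧
        ∀ i, (1 : ℚ) / 4 ≤ setVal (![utilA, utilA, utilB, utilB] i) (π i) := by
  rintro ⟨π, hπ, hval⟩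
  have hnontriv : ∀ i, (π i).Nontrivial := fun i =>
    nontrivial_of_le_setVal_of_forall_lt (by norm_num)
      (fun v _ => by fin_cases i <;> first | exact utilA_lt_quarter v | exact utilB_lt_quarter v)
      (hval i)
  obtain ⟨x, hx, hparity⟩ := (cycle8_eq_circulantGraph ▸ hπ).exists_arcs_of_nontrivial hnontriv
    (by simp) mem_zmultiples_fin_one
  have hinj : Function.Injective x := fun i j hij =>
    hπ.injective (fun i => (hnontriv i).nonempty) (by rw [hx, hx, hij])
  simp only [hx] at hval
  by_cases heven : Even (x 0)
  · have h2 : x 2 = 0 := eq_zero_of_quarter_le_setVal_utilB ((hparity 0 2).mp heven) (hval 2)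
    have h3 : x 3 = 0 := eq_zero_of_quarter_le_setVal_utilB ((hparity 0 3).mp heven) (hval 3)
    exact absurd (hinj (h2.trans h3.symm)) (by decide)
  · have h0 : x 0 = 1 := eq_one_of_quarter_le_setVal_utilA heven (hval 0)
    have h1 : x 1 = 1 := eq_one_of_quarter_le_setVal_utilA (heven ∘ (hparity 0 1).mpr) (hval 1)
    exact absurd (hinj (h0.trans h1.symm)) (by decide)
end

section
/- Consider the CFD instance I = (G, N, 𝒰) where G is the cycle on vertices v_1, …, v_8 (edges {v_i, v_{i+1}} for i ∈ [7] and {v_1, v_8}), N = {1, 2, 3, 4}, players 1 and 2 share the utility u with values (1, 4, 4, 1, 3, 2, 2, 3)/20 on (v_1, …, v_8), and players 3 and 4 share the utility u' with values (4, 4, 1, 3, 2, 2, 3, 1)/20 on (v_1, …, v_8). Then I admits no maximin share allocation: there is no valid allocation π with u_i(π(i)) ≥ mms_i(I) for every player i ∈ {1, 2, 3, 4}. -/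
lemma nontrivial_of_lt_setVal {V : Type*} {u : V → ℚ} {c : ℚ} {X : Set V} (hc : 0 ≤ c)
    (hu : ∀ x ∈ X, u x ≤ c) (hX : c < setVal u X) : X.Nontrivial := by
  by_contra hsub
  rcases (Set.not_nontrivial_iff.1 hsub).eq_empty_or_singleton with rfl | ⟨x, rfl⟩
  · rw [setVal, finsum_mem_empty] at hX
    exact hX.not_ge hc
  · rw [setVal, finsum_mem_singleton] at hX
    exact hX.not_ge (hu x rfl)

lemma adj_of_preconnOn_pair {V : Type*} {G : SimpleGraph V} {x y : V} (hxy : x ≠ y)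
    (h : PreconnOn G {x, y}) : G.Adj x y := by
  have : Nontrivial ({x, y} : Set V) := (Set.nontrivial_pair hxy).coe_sort
  obtain ⟨⟨z, rfl | rfl⟩, hz⟩ := h.exists_adj_of_nontrivial ⟨x, Or.inl rfl⟩
  · exact absurd rfl hz.ne
  · exact hz

lemma ncard_eq_and_iUnion_eq_univ {ι V : Type*} [Fintype ι] [Finite V] {S : ι → Set V} {k : ℕ}
    (hcard : Nat.card V = Fintype.card ι * k) (hdisj : Pairwise fun i j => Disjoint (S i) (S j))
    (hk : ∀ i, k ≤ (S i).ncard) : (∀ i, (S i).ncard = k) ∧ ⋃ i, S i = Set.univ := by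
  have hunion : (⋃ i, S i).ncard = ∑ i, (S i).ncard := by
    rw [Set.ncard_iUnion_of_finite (fun i => (S i).toFinite) hdisj, finsum_eq_sum_of_fintype]
  have hlower : ∑ _i : ι, k ≤ ∑ i, (S i).ncard := Finset.sum_le_sum fun i _ => hk i
  have hupper : (⋃ i, S i).ncard ≤ Nat.card V := Set.ncard_le_card _
  have hconst : ∑ _i : ι, k = Nat.card V := by simp [hcard]
  constructor
  · have hsum : ∑ _i : ι, k = ∑ i, (S i).ncard := by omega
    exact fun i => ((Finset.sum_eq_sum_iff_of_le fun i _ => hk i).1 hsum i (Finset.mem_univ i)).symm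
  · exact (Set.eq_univ_iff_ncard _).2 (by omega)

section CycleEdges

variable {n : ℕ}

/-- The edge `{a, a + 1}` of the cycle on `Fin n`, with addition modulo `n`. It is indexed by its
first endpoint so that a perfect matching is described by the parity of the indices. -/
def cycleEdge [NeZero n] (a : Fin n) : Set (Fin n) := {a, a + 1}

lemma mem_cycleEdge [NeZero n] {a x : Fin n} : x ∈ cycleEdge a ↔ x = a ∨ x = a + 1 :=
  Iff.rfl

lemma setVal_cycleEdge (u : Fin (n + 2) → ℚ) (a : Fin (n + 2)) :
    setVal u (cycleEdge a) = u a + u (a + 1) :=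
  finsum_mem_pair (by simp)

lemma connOn_cycleEdge (a : Fin (n + 2)) :
    ConnOn (SimpleGraph.cycleGraph (n + 2)) (cycleEdge a) :=
  SimpleGraph.induce_pair_connected_of_adj (by simp [SimpleGraph.cycleGraph_adj])

lemma isConnPartition_cycleEdge {m : ℕ} {f : Fin m → Fin (n + 2)}
    (hf : ∀ x, ∃! j, x ∈ cycleEdge (f j)) :
    IsConnPartition (SimpleGraph.cycleGraph (n + 2)) (fun j => cycleEdge (f j)) := by
  refine ⟨fun j => ⟨f j, Or.inl rfl⟩, fun j => connOn_cycleEdge _, fun j k hjk => ?_, ?_⟩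
  · exact Set.disjoint_left.2 fun x hj hk => hjk ((hf x).unique hj hk)
  · exact Set.iUnion_eq_univ_iff.2 fun x => (hf x).exists

lemma exists_eq_cycleEdge {X : Set (Fin (n + 2))} (hX : X.ncard = 2)
    (hconn : PreconnOn (SimpleGraph.cycleGraph (n + 2)) X) : ∃ a, X = cycleEdge a := by
  obtain ⟨x, y, hxy, rfl⟩ := Set.ncard_eq_two.1 hX
  rcases SimpleGraph.cycleGraph_adj.1 (adj_of_preconnOn_pair hxy hconn) with h | h
  · exact ⟨y, by rw [sub_eq_iff_eq_add'.1 h, Set.pair_comm, cycleEdge]⟩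
  · exact ⟨x, by rw [sub_eq_iff_eq_add'.1 h, cycleEdge]⟩

lemma mem_iff_even_val_of_alternating {T : Set (Fin (n + 1))}
    (hT : ∀ x, x + 1 ∈ T ↔ x ∉ T) (x : Fin (n + 1)) : x ∈ T ↔ (Even (x : ℕ) ↔ 0 ∈ T) := by
  induction x using Fin.induction with
  | zero => simp
  | succ i ih =>
    rw [← Fin.coeSucc_eq_succ, hT, ih, Fin.coeSucc_eq_succ, Fin.val_succ, Fin.val_castSucc,
      Nat.even_add_one]
    tauto

lemma add_one_mem_range_iff {ι : Type*} {a : ι → Fin (n + 2)}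
    (hdisj : Pairwise fun i j => Disjoint (cycleEdge (a i)) (cycleEdge (a j)))
    (hcover : ⋃ i, cycleEdge (a i) = Set.univ) (x : Fin (n + 2)) :
    x + 1 ∈ Set.range a ↔ x ∉ Set.range a := by
  constructor
  · rintro ⟨i, hi⟩ ⟨j, rfl⟩
    have hij : i ≠ j := by rintro rfl; simp at hi
    exact Set.disjoint_left.1 (hdisj hij) (Or.inl hi.symm) (Or.inr rfl)
  · intro hx
    obtain ⟨i, hi⟩ := Set.iUnion_eq_univ_iff.1 hcover (x + 1)
    rcases mem_cycleEdge.1 hi with h | h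
    · exact ⟨i, h.symm⟩
    · exact absurd ⟨i, (add_right_cancel h).symm⟩ hx

lemma even_iff_even_of_cycleEdge_matching {ι : Type*} {a : ι → Fin (n + 2)}
    (hdisj : Pairwise fun i j => Disjoint (cycleEdge (a i)) (cycleEdge (a j)))
    (hcover : ⋃ i, cycleEdge (a i) = Set.univ) (i j : ι) :
    Even (a i : ℕ) ↔ Even (a j : ℕ) := by
  have hparity (l : ι) : Even (a l : ℕ) ↔ 0 ∈ Set.range a :=
    (mem_iff_even_val_of_alternating (add_one_mem_range_iff hdisj hcover) (a l)).1
      (Set.mem_range_self l)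
  exact (hparity i).trans (hparity j).symm

theorem ValidAlloc.exists_cycleEdge_matching {ι : Type*} [Fintype ι]
    {π : ι → Set (Fin (n + 2))} (hπ : ValidAlloc (SimpleGraph.cycleGraph (n + 2)) π)
    (hcard : n + 2 = Fintype.card ι * 2) (hnontrivial : ∀ i, (π i).Nontrivial) :
    ∃ a : ι → Fin (n + 2), (∀ i, π i = cycleEdge (a i)) ∧ a.Injective ∧
      ∀ i j, Even (a i : ℕ) ↔ Even (a j : ℕ) := by
  obtain ⟨hconn, hdisj⟩ := hπ
  obtain ⟨htwo, hcover⟩ := ncard_eq_and_iUnion_eq_univ (by simpa using hcard) hdisj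
    fun i => Set.one_lt_ncard_iff_nontrivial.2 (hnontrivial i)
  choose a ha using fun i => exists_eq_cycleEdge (htwo i) (hconn i)
  obtain rfl : π = fun i => cycleEdge (a i) := funext ha
  refine ⟨a, fun _ => rfl, fun i j hij => ?_, even_iff_even_of_cycleEdge_matching hdisj hcover⟩
  by_contra hne
  exact Set.disjoint_left.1 (hdisj i j hne) (Or.inl rfl) (Or.inl hij)

end CycleEdges

lemma cycle8_eq_cycleGraph : cycle8 = SimpleGraph.cycleGraph 8 := by
  ext x y
  simp only [cycle8, SimpleGraph.fromRel_adj]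
  revert x y
  decide

/-- The utilities of the four players of the instance, in order. -/
abbrev playerUtil : Fin 4 → Fin 8 → ℚ := ![utilA, utilA, utilB, utilB]

lemma playerUtil_le_one_fifth (i : Fin 4) (x : Fin 8) : playerUtil i x ≤ 1 / 5 := by
  revert i x
  decide +kernel

lemma setVal_utilA_cycleEdge (a : Fin 8) : setVal utilA (cycleEdge a) =
    if Even (a : ℕ) then 1 / 4 else if a = 1 then 2 / 5 else 1 / 5 := by
  rw [setVal_cycleEdge]
  revert a
  decide +kernel

lemma setVal_utilB_cycleEdge (a : Fin 8) : setVal utilB (cycleEdge a) =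
    if Even (a : ℕ) then if a = 0 then 2 / 5 else 1 / 5 else 1 / 4 := by
  rw [setVal_cycleEdge]
  revert a
  decide +kernel

lemma eq_one_of_quarter_le_utilA {a : Fin 8} (ha : ¬Even (a : ℕ))
    (h : 1 / 4 ≤ setVal utilA (cycleEdge a)) : a = 1 := by
  by_contra hne
  rw [setVal_utilA_cycleEdge, if_neg ha, if_neg hne] at h
  norm_num at h

lemma eq_zero_of_quarter_le_utilB {a : Fin 8} (ha : Even (a : ℕ))
    (h : 1 / 4 ≤ setVal utilB (cycleEdge a)) : a = 0 := by
  by_contra hne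
  rw [setVal_utilB_cycleEdge, if_pos ha, if_neg hne] at h
  norm_num at h

lemma exists_isConnPartition_utilA_eq_quarter :
    ∃ P : Fin 4 → Set (Fin 8), IsConnPartition cycle8 P ∧ ∀ j, setVal utilA (P j) = 1 / 4 := by
  rw [cycle8_eq_cycleGraph]
  refine ⟨_, isConnPartition_cycleEdge (f := ![0, 2, 4, 6]) ?_, fun j => ?_⟩
  · simp only [mem_cycleEdge, ExistsUnique]
    decide
  · rw [setVal_utilA_cycleEdge, if_pos (by revert j; decide)]

lemma exists_isConnPartition_utilB_eq_quarter :
    ∃ P : Fin 4 → Set (Fin 8), IsConnPartition cycle8 P ∧ ∀ j, setVal utilB (P j) = 1 / 4 := by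
  rw [cycle8_eq_cycleGraph]
  refine ⟨_, isConnPartition_cycleEdge (f := ![1, 3, 5, 7]) ?_, fun j => ?_⟩
  · simp only [mem_cycleEdge, ExistsUnique]
    decide
  · rw [setVal_utilB_cycleEdge, if_neg (by revert j; decide)]

lemma exists_isConnPartition_playerUtil_eq_quarter (i : Fin 4) :
    ∃ P : Fin 4 → Set (Fin 8),
      IsConnPartition cycle8 P ∧ ∀ j, setVal (playerUtil i) (P j) = 1 / 4 := by
  fin_cases i
  exacts [exists_isConnPartition_utilA_eq_quarter, exists_isConnPartition_utilA_eq_quarter,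
    exists_isConnPartition_utilB_eq_quarter, exists_isConnPartition_utilB_eq_quarter]

/-- The cycle instance with four players (players 1 and 2 with utility `utilA`, players 3
and 4 with utility `utilB`) admits no maximin share allocation: there is no valid
allocation `π` with `u_i(π(i)) ≥ mms_i(I)` for every player `i` (here
`u_i(π(i)) ≥ mms_i(I)` is expressed as: for every partition of the items into 4 nonempty
connected parts, player `i` values her bundle at least as much as some part). -/
theorem no_mms_allocation_on_cycle :
    ¬ ∃ π : Fin 4 → Set (Fin 8), ValidAlloc cycle8 π ∧
        ∀ i, ∀ P : Fin 4 → Set (Fin 8), IsConnPartition cycle8 P →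
          ∃ j, setVal (![utilA, utilA, utilB, utilB] i) (P j) ≤
            setVal (![utilA, utilA, utilB, utilB] i) (π i) := by
  rintro ⟨π, hπ, hmms⟩
  have hquarter (i : Fin 4) : 1 / 4 ≤ setVal (playerUtil i) (π i) := by
    obtain ⟨P, hP, hval⟩ := exists_isConnPartition_playerUtil_eq_quarter i
    obtain ⟨j, hj⟩ := hmms i P hP
    exact (hval j).symm.trans_le hj
  have hnontrivial (i : Fin 4) : (π i).Nontrivial :=
    nontrivial_of_lt_setVal (by norm_num) (fun x _ => playerUtil_le_one_fifth i x)
      (lt_of_lt_of_le (by norm_num) (hquarter i))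
  rw [cycle8_eq_cycleGraph] at hπ
  obtain ⟨a, hedge, hinj, hparity⟩ := hπ.exists_cycleEdge_matching rfl hnontrivial
  simp only [hedge] at hquarter
  by_cases heven : Even (a 0 : ℕ)
  · have h₂ : a 2 = 0 := eq_zero_of_quarter_le_utilB ((hparity 0 2).1 heven) (hquarter 2)
    have h₃ : a 3 = 0 := eq_zero_of_quarter_le_utilB ((hparity 0 3).1 heven) (hquarter 3)
    exact absurd (hinj (h₂.trans h₃.symm)) (by decide)
  · have h₀ : a 0 = 1 := eq_one_of_quarter_le_utilA heven (hquarter 0)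
    have h₁ : a 1 = 1 := eq_one_of_quarter_le_utilA (mt (hparity 0 1).2 heven) (hquarter 1)
    exact absurd (hinj (h₀.trans h₁.symm)) (by decide)
end
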